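/- arXiv:1505.05496 — 2 statements merged into one kernel-verified Lean document; each statement's English description precedes it below -/
import Mathlib

section
/- Let G ∈ Cact(n;t) with t ≥ 3 and let C_h (h ≥ 4) be a cycle of G such that there is a unique vertex u of C_h adjacent to a vertex in V(G)∖V(C_h). Let v, w be vertices of C_h with uv, vw ∈ E(C_h), and let G* = G − vw + uw (so that v becomes a pendent vertex attached at u and the cycle shrinks to a cycle of length h−1). Then D_R(G) > D_R(G*). -/
open Finset

/-- Effective resistance between two vertices of a graph (for a connected graph
this is the effective resistance when every edge is a unit resistor), defined via
the matrix-tree / spanning-two-forest determinant formula. -/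
noncomputable def effRes {V : Type*} [Finite V] (G : SimpleGraph V) (u v : V) : ℝ :=
  letI := Fintype.ofFinite V
  letI := Classical.decEq V
  letI : DecidableRel G.Adj := Classical.decRel _
  if u = v then 0
  else
    Matrix.det ((G.lapMatrix ℝ).submatrix
        (fun w : {w : V // w ≠ u ∧ w ≠ v} => (w : V)) (fun w => (w : V)))
      / Matrix.det ((G.lapMatrix ℝ).submatrix
        (fun w : {w : V // w ≠ u} => (w : V)) (fun w => (w : V)))

/-- The degree resistance distance `D_R(G) = Σ_{ {u,v} ⊆ V } (d(u)+d(v)) R(u,v)`. -/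
noncomputable def degRes {V : Type*} [Finite V] (G : SimpleGraph V) : ℝ :=
  letI := Fintype.ofFinite V
  letI := Classical.decEq V
  letI : DecidableRel G.Adj := Classical.decRel _
  (1 / 2) * ∑ u : V, ∑ v : V, ((G.degree u : ℝ) + (G.degree v : ℝ)) * effRes G u v

/-- The Kirchhoff index `Kf(G) = Σ_{ {u,v} ⊆ V } R(u,v)`. -/
noncomputable def kirchhoffIndex {V : Type*} [Finite V] (G : SimpleGraph V) : ℝ :=
  letI := Fintype.ofFinite V
  (1 / 2) * ∑ u : V, ∑ v : V, effRes G u v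

/-- `Kf_v(G) = Σ_{u ∈ V} R(u,v)`. -/
noncomputable def Kfv {V : Type*} [Finite V] (G : SimpleGraph V) (v : V) : ℝ :=
  letI := Fintype.ofFinite V
  ∑ u : V, effRes G u v

/-- `D_v(G) = Σ_{u ∈ V} d(u) R(u,v)`. -/
noncomputable def Dv {V : Type*} [Finite V] (G : SimpleGraph V) (v : V) : ℝ :=
  letI := Fintype.ofFinite V
  letI := Classical.decEq V
  letI : DecidableRel G.Adj := Classical.decRel _
  ∑ u : V, (G.degree u : ℝ) * effRes G u v

/-- A subgraph is a cycle if it is connected and `2`-regular. -/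
def IsCycleSubgraph {V : Type*} {G : SimpleGraph V} (H : G.Subgraph) : Prop :=
  H.coe.Connected ∧ ∀ v ∈ H.verts, {u | H.Adj v u}.ncard = 2

/-- A cactus is a connected graph in which any two distinct cycles share at most
one vertex (equivalently, every block is an edge or a cycle). -/
def IsCactus {V : Type*} (G : SimpleGraph V) : Prop :=
  G.Connected ∧ ∀ H₁ H₂ : G.Subgraph, IsCycleSubgraph H₁ → IsCycleSubgraph H₂ →
    H₁ ≠ H₂ → (H₁.verts ∩ H₂.verts).ncard ≤ 1

/-- The number of cycles of a graph. -/
noncomputable def numCycles {V : Type*} (G : SimpleGraph V) : ℕ :=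
  {H : G.Subgraph | IsCycleSubgraph H}.ncard

/-- `G ∈ Cact(n;t)`: `G` is a cactus with `n` vertices and `t` cycles. -/
def MemCact {V : Type*} (n t : ℕ) (G : SimpleGraph V) : Prop :=
  IsCactus G ∧ Nat.card V = n ∧ numCycles G = t

/-- `G⁰(n,t)`: `t` triangles (on vertices `2i+1, 2i+2`, `i < t`) and `n - 2t - 1`
pendent edges, all sharing the common vertex `0`. -/
def G0 (n t : ℕ) : SimpleGraph (Fin n) :=
  SimpleGraph.fromRel (fun a b =>
    a.val = 0 ∨ (Odd a.val ∧ b.val = a.val + 1 ∧ b.val ≤ 2 * t))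

/-!
The effective resistances of `G` can be read off the Green function of the Laplacian grounded at one
vertex. Ground `G` at the vertex `u` where the cycle is attached. As `u` separates the cycle from
the rest of `G`, the Green function is the sum of the one with Dirichlet condition on the whole
cycle, which sees only the edges that are not on the cycle, and of the Green function
`min i j - i * j / k` of a `k`-cycle. With `N` vertices and `m` edges in `G`, the second summand
contributes `(N + m - k) * (k ^ 2 - 1) / 3` to the degree resistance distance.

Both `G` and `G - vw + uw` have such a decomposition, with cycles of lengths `k + 1` and `k`, and
the same outer part; the pendent vertex `v` of the latter adds `N - 2 + 2 * m`. What is left of the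
difference is an explicit polynomial in `N`, `m`, `k`. It is positive because `m > N` once there
are two cycles, which also forces `N ≥ k + 3`.
-/

open scoped Matrix

lemma adjugate_self_eq_det_submatrix {ι R : Type*} [Fintype ι] [DecidableEq ι] [CommRing R]
    (A : Matrix ι ι R) (i : ι) :
    A.adjugate i i =
      (A.submatrix (Subtype.val : {j // j ≠ i} → ι) Subtype.val).det := by
  have hsub : Subsingleton {j // ¬ j ≠ i} :=
    ⟨fun a b ↦ Subtype.ext ((not_not.mp a.2).trans (not_not.mp b.2).symm)⟩
  have hblock : (((A.updateRow i (Pi.single i 1)).toSquareBlockProp fun j ↦ ¬ j ≠ i)).det = 1 := by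
    rw [Matrix.det_eq_elem_of_subsingleton _ ⟨i, by simp⟩]
    simp [Matrix.toSquareBlockProp]
  rw [Matrix.adjugate_apply, Matrix.twoBlockTriangular_det _ (· ≠ i), hblock, mul_one]
  · congr 1
    ext a b
    simp [Matrix.toSquareBlockProp, Matrix.updateRow_apply, a.2]
  · rintro a ha b hb
    obtain rfl := not_not.mp ha
    simp [hb]

section Green

variable {V : Type*} [Fintype V] [DecidableEq V] {G : SimpleGraph V} [DecidableRel G.Adj]

lemma sum_lapMatrix_mulVec {R : Type*} [CommRing R] (f : V → R) :
    ∑ z, (G.lapMatrix R *ᵥ f) z = 0 := by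
  rw [← one_dotProduct, Matrix.dotProduct_mulVec, ← Matrix.mulVec_transpose,
    (G.isSymm_lapMatrix (R := R)).eq]
  exact (congrArg (· ⬝ᵥ f) G.lapMatrix_mulVec_const_eq_zero).trans (zero_dotProduct f)

lemma eq_zero_of_lapMatrix_mulVec_eq_zero_off (hG : G.Connected) {S : Set V} (hS : S.Nonempty)
    {f : V → ℝ} (hf : ∀ z ∈ S, f z = 0) (hLf : ∀ z ∉ S, (G.lapMatrix ℝ *ᵥ f) z = 0) : f = 0 := by
  have henergy : f ⬝ᵥ (G.lapMatrix ℝ *ᵥ f) = 0 := sum_eq_zero fun z _ ↦ by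
    by_cases hz : z ∈ S
    · rw [hf z hz, zero_mul]
    · rw [hLf z hz, mul_zero]
  rw [← Matrix.toLinearMap₂'_apply',
    G.lapMatrix_toLinearMap₂'_apply'_eq_zero_iff_forall_reachable] at henergy
  obtain ⟨s, hs⟩ := hS
  ext z
  exact (henergy z s (hG.preconnected z s)).trans (hf s hs)

/-- `g` is the Green function of the Laplacian of `G` with Dirichlet boundary `S`: the potential
`g b` vanishes on `S` and is created by a unit current that enters at `b` and leaves through `S`. -/
structure IsDirichletGreen (G : SimpleGraph V) [DecidableRel G.Adj] (S : Set V)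
    (g : V → V → ℝ) : Prop where
  eq_zero : ∀ b z, b ∈ S ∨ z ∈ S → g b z = 0
  lapMatrix_mulVec : ∀ b, ∀ z ∉ S, (G.lapMatrix ℝ *ᵥ g b) z = if z = b then 1 else 0

lemma exists_isDirichletGreen (hG : G.Connected) {S : Set V} (hS : S.Nonempty) :
    ∃ g, IsDirichletGreen G S g := by
  classical
  let A : Matrix V V ℝ := fun z ↦ if z ∈ S then Pi.single z 1 else G.lapMatrix ℝ z
  have hA_mem (f : V → ℝ) {z : V} (hz : z ∈ S) : (A *ᵥ f) z = f z := by
    simp [A, Matrix.mulVec, hz]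
  have hA_notMem (f : V → ℝ) {z : V} (hz : z ∉ S) : (A *ᵥ f) z = (G.lapMatrix ℝ *ᵥ f) z := by
    simp [A, Matrix.mulVec, hz]
  have hA_ker {f : V → ℝ} (hf : A *ᵥ f = 0) : f = 0 :=
    eq_zero_of_lapMatrix_mulVec_eq_zero_off hG hS
      (fun z hz ↦ by rw [← hA_mem f hz, hf, Pi.zero_apply])
      (fun z hz ↦ by rw [← hA_notMem f hz, hf, Pi.zero_apply])
  have hA_surj : Function.Surjective A.mulVec := by
    rw [Matrix.mulVec_surjective_iff_isUnit, ← Matrix.mulVec_injective_iff_isUnit]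
    intro f f' h
    exact sub_eq_zero.mp (hA_ker (by rw [Matrix.mulVec_sub, sub_eq_zero]; exact h))
  choose g hg using fun b ↦ hA_surj (Sᶜ.indicator (Pi.single b 1))
  refine ⟨g, ⟨fun b z hbz ↦ ?_, fun b z hz ↦ ?_⟩⟩
  · rcases hbz with hb | hz
    · have hsource : Sᶜ.indicator (Pi.single b (1 : ℝ)) = 0 := by
        rw [Set.indicator_eq_zero']
        exact Set.disjoint_left.mpr fun y hy hyS ↦ by
          have : y = b := by simpa [Pi.single_apply] using hy
          exact hyS (this ▸ hb)
      rw [hA_ker ((hg b).trans hsource), Pi.zero_apply]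
    · rw [← hA_mem (g b) hz, hg b, Set.indicator_of_notMem (by simpa using hz)]
  · rw [← hA_notMem (g b) hz, hg b, Set.indicator_of_mem (by simpa using hz), Pi.single_apply]

variable {g : V → V → ℝ} {u : V}

lemma IsDirichletGreen.lapMatrix_mulVec_singleton (hg : IsDirichletGreen G {u} g) (b z : V) :
    (G.lapMatrix ℝ *ᵥ g b) z = (if z = b then 1 else 0) - if z = u then 1 else 0 := by
  by_cases hz : z = u
  · subst hz
    have hsum := sum_lapMatrix_mulVec (G := G) (g b)
    rw [← add_sum_erase _ _ (mem_univ z),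
      sum_congr rfl fun x hx ↦ hg.lapMatrix_mulVec b x (ne_of_mem_erase hx),
      sum_ite_eq'] at hsum
    by_cases hb : b = z
    · simp_all
    · simp only [mem_erase, ne_eq, hb, not_false_eq_true, mem_univ, and_self, if_true] at hsum
      rw [if_neg (Ne.symm hb), if_pos rfl]
      linarith
  · rw [hg.lapMatrix_mulVec b z hz, if_neg hz, sub_zero]

lemma IsDirichletGreen.changeGround (hg : IsDirichletGreen G {u} g) (x : V) :
    IsDirichletGreen G {x} fun b z ↦ g b z - g b x - g x z + g x x where
  eq_zero := by rintro b z (rfl | rfl) <;> ring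
  lapMatrix_mulVec b z hz := by
    have hsplit : (fun z ↦ g b z - g b x - g x z + g x x) =
        g b - g x + (g x x - g b x) • fun _ ↦ (1 : ℝ) := by
      ext z
      simp only [Pi.add_apply, Pi.sub_apply, Pi.smul_apply, smul_eq_mul]
      ring
    rw [hsplit, Matrix.mulVec_add, Matrix.mulVec_sub, Matrix.mulVec_smul,
      G.lapMatrix_mulVec_const_eq_zero, smul_zero, add_zero, Pi.sub_apply,
      hg.lapMatrix_mulVec_singleton, hg.lapMatrix_mulVec_singleton,
      if_neg (Set.mem_singleton_iff.not.mp hz)]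
    ring

lemma effRes_eq_ite (G : SimpleGraph V) [DecidableRel G.Adj] (x y : V) :
    effRes G x y = if x = y then 0 else
      ((G.lapMatrix ℝ).submatrix (Subtype.val : {w // w ≠ x ∧ w ≠ y} → V) Subtype.val).det /
        ((G.lapMatrix ℝ).submatrix (Subtype.val : {w // w ≠ x} → V) Subtype.val).det := by
  unfold effRes
  congr!

lemma IsDirichletGreen.inv_submatrix_lapMatrix (hg : IsDirichletGreen G {u} g) :
    ((G.lapMatrix ℝ).submatrix (Subtype.val : {w // w ≠ u} → V) Subtype.val)⁻¹ =
      Matrix.of fun a b : {w : V // w ≠ u} ↦ g b a := by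
  refine Matrix.inv_eq_right_inv ?_
  ext a b
  have hsum : ∑ z ∈ univ.erase u, G.lapMatrix ℝ a z * g b z =
      ∑ z : {w // w ≠ u}, G.lapMatrix ℝ a z * g b z := sum_subtype _ (by simp) _
  rw [Matrix.mul_apply, Matrix.one_apply]
  simp only [Matrix.submatrix_apply, Matrix.of_apply, ← hsum, Subtype.ext_iff]
  rw [← hg.lapMatrix_mulVec b a a.2, Matrix.mulVec, dotProduct,
    ← add_sum_erase _ _ (mem_univ u), hg.eq_zero b u (Or.inr rfl), mul_zero, zero_add]

lemma IsDirichletGreen.effRes_ground (hg : IsDirichletGreen G {u} g) (y : V) :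
    effRes G u y = g y y := by
  rw [effRes_eq_ite]
  split_ifs with huy
  · rw [← huy, hg.eq_zero u u (Or.inl rfl)]
  · let y' : {w : V // w ≠ u} := ⟨y, Ne.symm huy⟩
    let e : {w : V // w ≠ u ∧ w ≠ y} ≃ {w : {w : V // w ≠ u} // w ≠ y'} :=
      { toFun w := ⟨⟨w, w.2.1⟩, fun h ↦ w.2.2 (congrArg Subtype.val h)⟩
        invFun w := ⟨w.1.1, w.1.2, fun h ↦ w.2 (Subtype.ext h)⟩ }
    have hinv := congrFun₂ hg.inv_submatrix_lapMatrix y' y'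
    rw [Matrix.inv_def, Matrix.smul_apply, adjugate_self_eq_det_submatrix, Ring.inverse_eq_inv',
      smul_eq_mul, ← Matrix.det_submatrix_equiv_self e, ← div_eq_inv_mul] at hinv
    exact hinv

theorem IsDirichletGreen.effRes_eq (hg : IsDirichletGreen G {u} g) (x y : V) :
    effRes G x y = g x x + g y y - g x y - g y x := by
  rw [(hg.changeGround x).effRes_ground y]
  ring

end Green

section ResistanceSum

variable {V : Type*} [Fintype V]

/-- The degree resistance distance of a graph with vertex weights (degrees) `d` whose effective
resistances are those read off the Green function `g`. Allowing arbitrary `d` and `g` makes this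
bilinear, so that contributions of different parts of a graph can be added up. -/
def resistanceSum (d : V → ℝ) (g : V → V → ℝ) : ℝ :=
  ∑ x, ∑ y, d x * (g x x + g y y - g x y - g y x)

lemma degRes_eq_sum_degree_mul_effRes (G : SimpleGraph V) [DecidableRel G.Adj] :
    degRes G = 1 / 2 * ∑ x, ∑ y, ((G.degree x : ℝ) + G.degree y) * effRes G x y := by
  unfold degRes
  congr!

theorem IsDirichletGreen.degRes_eq_resistanceSum [DecidableEq V] {G : SimpleGraph V}
    [DecidableRel G.Adj] {u : V} {g : V → V → ℝ} (hg : IsDirichletGreen G {u} g) :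
    degRes G = resistanceSum (fun x ↦ (G.degree x : ℝ)) g := by
  have hswap : ∑ x, ∑ y, (G.degree y : ℝ) * (g x x + g y y - g x y - g y x) =
      resistanceSum (fun x ↦ (G.degree x : ℝ)) g := by
    rw [sum_comm]
    exact sum_congr rfl fun x _ ↦ sum_congr rfl fun y _ ↦ by ring
  simp only [degRes_eq_sum_degree_mul_effRes, hg.effRes_eq, add_mul, sum_add_distrib, hswap]
  rw [← resistanceSum]
  ring

lemma resistanceSum_add (d : V → ℝ) (g g' : V → V → ℝ) :
    resistanceSum d (g + g') = resistanceSum d g + resistanceSum d g' := by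
  simp only [resistanceSum, ← sum_add_distrib, Pi.add_apply]
  exact sum_congr rfl fun x _ ↦ sum_congr rfl fun y _ ↦ by ring

lemma resistanceSum_eq (d : V → ℝ) (g : V → V → ℝ) :
    resistanceSum d g = Fintype.card V * ∑ x, d x * g x x + (∑ x, d x) * ∑ x, g x x -
      ∑ x, ∑ y, d x * (g x y + g y x) := by
  have hterm (x y : V) : d x * (g x x + g y y - g x y - g y x) =
      d x * g x x + d x * g y y - d x * (g x y + g y x) := by ring
  simp only [resistanceSum, hterm, sum_sub_distrib, sum_add_distrib, sum_const, card_univ,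
    nsmul_eq_mul, ← mul_sum, ← sum_mul]

lemma resistanceSum_congr {d d' : V → ℝ} {g : V → V → ℝ} (hsum : ∑ x, d x = ∑ x, d' x)
    (h : ∀ x, d x = d' x ∨ ∀ y, g x y = 0 ∧ g y x = 0) :
    resistanceSum d g = resistanceSum d' g := by
  have hmul (x y : V) : d x * g x y = d' x * g x y ∧ d x * g y x = d' x * g y x := by
    rcases h x with hx | hx <;> simp [hx]
  simp only [resistanceSum_eq, mul_add, hmul, hsum]

lemma resistanceSum_single [DecidableEq V] (d : V → ℝ) (v : V) :
    resistanceSum d (Pi.single v (Pi.single v 1)) =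
      (Fintype.card V - 2) * d v + ∑ x, d x := by
  have hsingle (x y : V) : (Pi.single v (Pi.single v 1) : V → V → ℝ) x y =
      if x = v then if y = v then 1 else 0 else 0 := by
    by_cases hx : x = v <;> simp [Pi.single_apply, hx]
  simp only [resistanceSum_eq, hsingle, mul_ite, mul_one, mul_zero, sum_ite_eq', mem_univ,
    ↓reduceIte, mul_add, sum_add_distrib, sum_ite_irrel, sum_const_zero]
  ring

end ResistanceSum

section CycleGreen

/-- The Green function of the cycle of length `k` grounded at its vertex `0`, in terms of the
positions `i, j ≤ k` along the cycle (the positions `0` and `k` being the same vertex). -/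
noncomputable def cycleGreen (k i j : ℕ) : ℝ := (min i j : ℕ) - (i * j : ℝ) / k

variable (k i j : ℕ)

@[simp]
lemma cycleGreen_zero_left : cycleGreen k 0 j = 0 := by simp [cycleGreen]

@[simp]
lemma cycleGreen_zero_right : cycleGreen k i 0 = 0 := by simp [cycleGreen]

lemma cycleGreen_comm : cycleGreen k i j = cycleGreen k j i := by
  rw [cycleGreen, cycleGreen, min_comm, mul_comm]

variable {k i j} in
lemma cycleGreen_self_right (hk : k ≠ 0) (hi : i ≤ k) : cycleGreen k i k = 0 := by
  rw [cycleGreen, min_eq_left hi, mul_div_cancel_right₀ _ (Nat.cast_ne_zero.mpr hk), sub_self]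

lemma cycleGreen_secondDifference :
    2 * cycleGreen k j (i + 1) - cycleGreen k j i - cycleGreen k j (i + 2) =
      if i + 1 = j then 1 else 0 := by
  have hmin : 2 * min j (i + 1) = min j i + min j (i + 2) + if i + 1 = j then 1 else 0 := by
    split_ifs <;> omega
  have hmin' : (2 * (min j (i + 1) : ℕ) : ℝ) =
      (min j i : ℕ) + (min j (i + 2) : ℕ) + if i + 1 = j then 1 else 0 := by
    exact_mod_cast hmin
  simp only [cycleGreen, Nat.cast_add, Nat.cast_one, Nat.cast_ofNat]
  linear_combination hmin'

lemma sum_range_cast : ∑ i ∈ range k, (i : ℝ) = k * (k - 1) / 2 := by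
  induction k with
  | zero => simp
  | succ k ih => rw [sum_range_succ, ih]; push_cast; ring

lemma sum_range_cast_sq : ∑ i ∈ range k, (i : ℝ) ^ 2 = (k - 1) * k * (2 * k - 1) / 6 := by
  induction k with
  | zero => simp
  | succ k ih => rw [sum_range_succ, ih]; push_cast; ring

lemma sum_range_min : ∑ i ∈ range k, ∑ j ∈ range k, ((min i j : ℕ) : ℝ) =
    (k - 1) * k * (2 * k - 1) / 6 := by
  induction k with
  | zero => simp
  | succ k ih =>
    have hcol : ∑ i ∈ range k, ((min i k : ℕ) : ℝ) = k * (k - 1) / 2 := by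
      rw [← sum_range_cast]
      exact sum_congr rfl fun i hi ↦ by rw [min_eq_left (mem_range.mp hi).le]
    simp only [sum_range_succ, sum_add_distrib, ih, hcol, min_comm k, min_self]
    push_cast
    ring

variable {k} in
lemma sum_cycleGreen_diag (hk : k ≠ 0) :
    ∑ i ∈ range k, cycleGreen k i i = ((k : ℝ) ^ 2 - 1) / 6 := by
  have hk' : (k : ℝ) ≠ 0 := Nat.cast_ne_zero.mpr hk
  simp only [cycleGreen, min_self, sum_sub_distrib, ← sum_div, ← pow_two, sum_range_cast,
    sum_range_cast_sq]
  field_simp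
  ring

variable {k} in
lemma sum_cycleGreen (hk : k ≠ 0) :
    ∑ i ∈ range k, ∑ j ∈ range k, cycleGreen k i j = k * ((k : ℝ) ^ 2 - 1) / 12 := by
  have hk' : (k : ℝ) ≠ 0 := Nat.cast_ne_zero.mpr hk
  simp only [cycleGreen, sum_sub_distrib, ← sum_div, ← sum_mul_sum, sum_range_cast, sum_range_min]
  field_simp
  ring

end CycleGreen

lemma sum_degree_eq_two_mul_ncard_edgeSet {V : Type*} [Fintype V] (G : SimpleGraph V)
    [DecidableRel G.Adj] : ∑ x, (G.degree x : ℝ) = 2 * G.edgeSet.ncard := by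
  classical
  rw [Set.ncard_eq_toFinset_card', ← SimpleGraph.edgeFinset]
  exact_mod_cast G.sum_degrees_eq_twice_card_edges

section HangingCycle

variable {V : Type*} {G : SimpleGraph V} {k : ℕ} {c : ℕ → V}

/-- The vertices `c 0, …, c (k - 1)`, with `c k = c 0`, form a cycle of `G` that is joined to the
rest of `G` at `c 0` only. -/
structure IsHangingCycle (G : SimpleGraph V) (k : ℕ) (c : ℕ → V) : Prop where
  three_le : 3 ≤ k
  injOn : Set.InjOn c (Set.Iio k)
  closed : c k = c 0
  adj_iff : ∀ i, i + 1 < k → ∀ z, G.Adj (c (i + 1)) z ↔ z = c i ∨ z = c (i + 2)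

lemma exists_apply_succ_eq {x : V} (hx : x ∈ c '' Set.Iio k) (hx0 : x ≠ c 0) :
    ∃ i, i + 1 < k ∧ c (i + 1) = x := by
  obtain ⟨_ | i, hi, rfl⟩ := hx
  · exact absurd rfl hx0
  · exact ⟨i, hi, rfl⟩

namespace IsHangingCycle

variable (hc : IsHangingCycle G k c)
include hc

lemma ne_zero : k ≠ 0 := by
  have := hc.three_le
  omega

lemma apply_inj {i j : ℕ} (hi : i < k) (hj : j < k) : c i = c j ↔ i = j :=
  hc.injOn.eq_iff hi hj

lemma apply_ne {i j : ℕ} (hi : i < k) (hj : j < k) (hij : i ≠ j) : c i ≠ c j :=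
  (hc.apply_inj hi hj).not.mpr hij

lemma zero_mem_image : c 0 ∈ c '' Set.Iio k :=
  Set.mem_image_of_mem c (Nat.pos_of_ne_zero hc.ne_zero)

lemma apply_mem_image {i : ℕ} (hi : i ≤ k) : c i ∈ c '' Set.Iio k := by
  rcases hi.lt_or_eq with hi | rfl
  · exact Set.mem_image_of_mem c hi
  · exact hc.closed ▸ hc.zero_mem_image

lemma apply_ne_apply_add_two {i : ℕ} (hi : i + 1 < k) : c i ≠ c (i + 2) := by
  have hk := hc.three_le
  rcases (show i + 2 ≤ k from hi).lt_or_eq with hlt | heq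
  · exact hc.apply_ne (by omega) hlt (by omega)
  · exact heq ▸ hc.closed ▸ hc.apply_ne (by omega) (by omega) (by omega)

lemma eq_zero_of_adj {x y : V} (hx : x ∉ c '' Set.Iio k) (hy : y ∈ c '' Set.Iio k)
    (hxy : G.Adj x y) : y = c 0 := by
  by_contra hy0
  obtain ⟨i, hi, rfl⟩ := exists_apply_succ_eq hy hy0
  rcases (hc.adj_iff i hi x).mp hxy.symm with rfl | rfl
  · exact hx (hc.apply_mem_image (by omega))
  · exact hx (hc.apply_mem_image hi)

variable [Fintype V] [DecidableRel G.Adj]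

lemma neighborFinset_eq [DecidableEq V] {i : ℕ} (hi : i + 1 < k) :
    G.neighborFinset (c (i + 1)) = {c i, c (i + 2)} := by
  ext z
  rw [SimpleGraph.mem_neighborFinset, hc.adj_iff i hi, mem_insert, mem_singleton]

lemma degree_eq_two {i : ℕ} (hi : i + 1 < k) : G.degree (c (i + 1)) = 2 := by
  classical
  rw [← G.card_neighborFinset_eq_degree, hc.neighborFinset_eq hi,
    card_pair (hc.apply_ne_apply_add_two hi)]

lemma lapMatrix_mulVec_apply [DecidableEq V] (f : V → ℝ) {i : ℕ} (hi : i + 1 < k) :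
    (G.lapMatrix ℝ *ᵥ f) (c (i + 1)) = 2 * f (c (i + 1)) - f (c i) - f (c (i + 2)) := by
  rw [G.lapMatrix_mulVec_apply, hc.degree_eq_two hi, hc.neighborFinset_eq hi,
    sum_pair (hc.apply_ne_apply_add_two hi)]
  push_cast
  ring

end IsHangingCycle

/-- The position along the cycle `c` of length `k`; vertices off the cycle get position `0`, which
is that of the vertex `c 0` where the cycle is attached. -/
noncomputable def cyclePos (k : ℕ) (c : ℕ → V) : V → ℕ :=
  Function.extend (fun i : Fin k ↦ c i) (↑) 0

lemma cyclePos_of_notMem {x : V} (hx : x ∉ c '' Set.Iio k) : cyclePos k c x = 0 :=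
  Function.extend_apply' _ _ _ fun ⟨i, hi⟩ ↦ hx ⟨i, i.2, hi⟩

lemma cyclePos_apply (hc : Set.InjOn c (Set.Iio k)) {i : ℕ} (hi : i < k) :
    cyclePos k c (c i) = i :=
  Function.Injective.extend_apply (fun a b h ↦ Fin.ext (hc a.2 b.2 h)) _ _ (⟨i, hi⟩ : Fin k)

lemma cyclePos_le (hc : Set.InjOn c (Set.Iio k)) (x : V) : cyclePos k c x ≤ k := by
  by_cases hx : x ∈ c '' Set.Iio k
  · obtain ⟨i, hi, rfl⟩ := hx
    exact (cyclePos_apply hc hi).trans_le (le_of_lt hi)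
  · exact (cyclePos_of_notMem hx).trans_le k.zero_le

lemma sum_cyclePos [Fintype V] (hc : Set.InjOn c (Set.Iio k)) {F : ℕ → ℝ} (hF : F 0 = 0) :
    ∑ x, F (cyclePos k c x) = ∑ i ∈ range k, F i := by
  refine (sum_of_injOn c (by simpa using hc) (by simp) (fun x _ hx ↦ ?_) fun i hi ↦ ?_).symm
  · rw [cyclePos_of_notMem (by simpa using hx), hF]
  · rw [cyclePos_apply hc (mem_range.mp hi)]

/-- The Green function of the cycle `c`, extended to all vertices: a vertex off the cycle has the
potential of the attaching vertex `c 0`. -/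
noncomputable def cycleGreenOn (k : ℕ) (c : ℕ → V) (x y : V) : ℝ :=
  cycleGreen k (cyclePos k c x) (cyclePos k c y)

namespace IsHangingCycle

variable (hc : IsHangingCycle G k c)
include hc

lemma cycleGreenOn_apply_right (x : V) {i : ℕ} (hi : i ≤ k) :
    cycleGreenOn k c x (c i) = cycleGreen k (cyclePos k c x) i := by
  rw [cycleGreenOn]
  rcases hi.lt_or_eq with hi | rfl
  · rw [cyclePos_apply hc.injOn hi]
  · rw [hc.closed, cyclePos_apply hc.injOn (Nat.pos_of_ne_zero hc.ne_zero),
      cycleGreen_self_right hc.ne_zero (cyclePos_le hc.injOn x), cycleGreen_zero_right]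

lemma cyclePos_zero : cyclePos k c (c 0) = 0 :=
  cyclePos_apply hc.injOn (Nat.pos_of_ne_zero hc.ne_zero)

lemma cyclePos_eq_zero {x : V} (hx : x ∈ c '' Set.Iio k → x = c 0) : cyclePos k c x = 0 := by
  by_cases hxS : x ∈ c '' Set.Iio k
  · rw [hx hxS, hc.cyclePos_zero]
  · exact cyclePos_of_notMem hxS

lemma cyclePos_eq_succ_iff {b : V} {i : ℕ} (hi : i + 1 < k) :
    i + 1 = cyclePos k c b ↔ c (i + 1) = b := by
  constructor
  · intro h
    by_cases hb : b ∈ c '' Set.Iio k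
    · obtain ⟨j, hj, rfl⟩ := hb
      rw [h, cyclePos_apply hc.injOn hj]
    · exact absurd (h.trans (cyclePos_of_notMem hb)) i.succ_ne_zero
  · rintro rfl
    exact (cyclePos_apply hc.injOn hi).symm

variable [Fintype V] [DecidableRel G.Adj]

theorem resistanceSum_cycleGreenOn : resistanceSum (fun x ↦ (G.degree x : ℝ)) (cycleGreenOn k c) =
      (Fintype.card V + G.edgeSet.ncard - k : ℝ) * ((k : ℝ) ^ 2 - 1) / 3 := by
  classical
  have hdegree (x y : V) : (G.degree x : ℝ) * cycleGreenOn k c x y = 2 * cycleGreenOn k c x y := by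
    by_cases hx : x ∈ c '' Set.Iio k ∧ x ≠ c 0
    · obtain ⟨i, hi, rfl⟩ := exists_apply_succ_eq hx.1 hx.2
      rw [hc.degree_eq_two hi, Nat.cast_ofNat]
    · have hpos : cyclePos k c x = 0 :=
        hc.cyclePos_eq_zero fun hxS ↦ not_not.mp fun hx0 ↦ hx ⟨hxS, hx0⟩
      simp [cycleGreenOn, hpos]
  have hsymm (x y : V) : cycleGreenOn k c x y = cycleGreenOn k c y x := cycleGreen_comm _ _ _
  have hdiag : ∑ x, cycleGreenOn k c x x = ((k : ℝ) ^ 2 - 1) / 6 := by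
    rw [← sum_cycleGreen_diag hc.ne_zero]
    exact sum_cyclePos hc.injOn (F := fun i ↦ cycleGreen k i i) (cycleGreen_zero_left k 0)
  have htotal : ∑ x, ∑ y, cycleGreenOn k c x y = k * ((k : ℝ) ^ 2 - 1) / 12 := by
    rw [← sum_cycleGreen hc.ne_zero, ← sum_cyclePos hc.injOn (by simp)]
    exact sum_congr rfl fun x _ ↦ sum_cyclePos hc.injOn (cycleGreen_zero_right k _)
  simp only [resistanceSum_eq, ← hsymm, ← two_mul, mul_left_comm _ (2 : ℝ), hdegree, ← mul_sum,
    hdiag, htotal, sum_degree_eq_two_mul_ncard_edgeSet]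
  ring

variable [DecidableEq V] {g : V → V → ℝ}

lemma lapMatrix_mulVec_cycleGreenOn (b : V) {i : ℕ} (hi : i + 1 < k) :
    (G.lapMatrix ℝ *ᵥ cycleGreenOn k c b) (c (i + 1)) = if c (i + 1) = b then 1 else 0 := by
  rw [hc.lapMatrix_mulVec_apply _ hi, hc.cycleGreenOn_apply_right b hi.le,
    hc.cycleGreenOn_apply_right b (by omega), hc.cycleGreenOn_apply_right b (by omega),
    cycleGreen_secondDifference]
  exact if_congr (hc.cyclePos_eq_succ_iff hi) rfl rfl

lemma lapMatrix_mulVec_cycleGreenOn_of_notMem (b : V) {z : V} (hz : z ∉ c '' Set.Iio k) :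
    (G.lapMatrix ℝ *ᵥ cycleGreenOn k c b) z = 0 := by
  have hzero {y : V} (hy : y ∈ c '' Set.Iio k → y = c 0) : cycleGreenOn k c b y = 0 := by
    rw [cycleGreenOn, hc.cyclePos_eq_zero hy, cycleGreen_zero_right]
  rw [G.lapMatrix_mulVec_apply, hzero fun h ↦ absurd h hz, mul_zero, zero_sub, neg_eq_zero]
  exact sum_eq_zero fun y hy ↦ hzero fun hyS ↦
    hc.eq_zero_of_adj hz hyS ((G.mem_neighborFinset z y).mp hy)

theorem isDirichletGreen_add_cycleGreenOn (hg : IsDirichletGreen G (c '' Set.Iio k) g) :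
    IsDirichletGreen G {c 0} (g + cycleGreenOn k c) where
  eq_zero := by
    rintro b z (rfl | rfl)
    · simp [hg.eq_zero (c 0) z (Or.inl hc.zero_mem_image), cycleGreenOn, hc.cyclePos_zero]
    · simp [hg.eq_zero b (c 0) (Or.inr hc.zero_mem_image), cycleGreenOn, hc.cyclePos_zero]
  lapMatrix_mulVec b z hz := by
    rw [Pi.add_apply, Matrix.mulVec_add, Pi.add_apply]
    by_cases hzS : z ∈ c '' Set.Iio k
    · obtain ⟨i, hi, rfl⟩ := exists_apply_succ_eq hzS hz
      have hvanish {j : ℕ} (hj : j ≤ k) : g b (c j) = 0 :=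
        hg.eq_zero b (c j) (Or.inr (hc.apply_mem_image hj))
      rw [hc.lapMatrix_mulVec_cycleGreenOn b hi, hc.lapMatrix_mulVec_apply _ hi, hvanish hi.le,
        hvanish (by omega), hvanish hi]
      ring
    · rw [hg.lapMatrix_mulVec b z hzS, hc.lapMatrix_mulVec_cycleGreenOn_of_notMem b hzS, add_zero]

theorem degRes_eq (hg : IsDirichletGreen G (c '' Set.Iio k) g) :
    degRes G = resistanceSum (fun x ↦ (G.degree x : ℝ)) g +
      (Fintype.card V + G.edgeSet.ncard - k : ℝ) * ((k : ℝ) ^ 2 - 1) / 3 := by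
  rw [(hc.isDirichletGreen_add_cycleGreenOn hg).degRes_eq_resistanceSum, resistanceSum_add,
    hc.resistanceSum_cycleGreenOn]

end IsHangingCycle

end HangingCycle

section Modification

variable {V : Type*} [Fintype V] {G G' : SimpleGraph V} [DecidableRel G.Adj] [DecidableRel G'.Adj]

lemma neighborFinset_congr {x : V} (h : ∀ y, G.Adj x y ↔ G'.Adj x y) :
    G.neighborFinset x = G'.neighborFinset x := by
  ext y
  rw [G.mem_neighborFinset, G'.mem_neighborFinset, h]

lemma degree_congr {x : V} (h : ∀ y, G.Adj x y ↔ G'.Adj x y) : G.degree x = G'.degree x := by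
  rw [← G.card_neighborFinset_eq_degree, neighborFinset_congr h, G'.card_neighborFinset_eq_degree]

variable [DecidableEq V] {S : Set V} {g : V → V → ℝ}

lemma IsDirichletGreen.congr (hg : IsDirichletGreen G S g)
    (h : ∀ x ∉ S, ∀ y, G.Adj x y ↔ G'.Adj x y) : IsDirichletGreen G' S g where
  eq_zero := hg.eq_zero
  lapMatrix_mulVec b z hz := by
    rw [← hg.lapMatrix_mulVec b z hz, G.lapMatrix_mulVec_apply, G'.lapMatrix_mulVec_apply,
      neighborFinset_congr (h z hz), degree_congr (h z hz)]

lemma lapMatrix_mulVec_apply_of_pendant {u v : V} (h : ∀ z, G.Adj v z ↔ z = u) (f : V → ℝ) :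
    (G.lapMatrix ℝ *ᵥ f) v = f v - f u := by
  have hneighbor : G.neighborFinset v = {u} := by
    ext z
    rw [G.mem_neighborFinset, h, mem_singleton]
  rw [G.lapMatrix_mulVec_apply, ← G.card_neighborFinset_eq_degree, hneighbor, card_singleton,
    sum_singleton, Nat.cast_one, one_mul]

theorem IsDirichletGreen.add_single_of_pendant {u v : V} (hg : IsDirichletGreen G (insert v S) g)
    (hv : v ∉ S) (hu : u ∈ S) (h : ∀ z, G.Adj v z ↔ z = u) :
    IsDirichletGreen G S (g + Pi.single v (Pi.single v 1)) := by
  have hsingle (b z : V) : (Pi.single v (Pi.single v 1) : V → V → ℝ) b z =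
      if z = v then if v = b then 1 else 0 else 0 := by
    rcases eq_or_ne b v with rfl | hb
    · simp [Pi.single_apply]
    · simp [hb, hb.symm]
  have hne {x : V} (hx : x ∈ S) : x ≠ v := ne_of_mem_of_not_mem hx hv
  refine ⟨fun b z hbz ↦ ?_, fun b z hz ↦ ?_⟩
  · rw [Pi.add_apply, Pi.add_apply, hsingle,
      hg.eq_zero b z (hbz.imp (Set.mem_insert_of_mem v) (Set.mem_insert_of_mem v)), zero_add]
    rcases hbz with hb | hz
    · rw [if_neg (hne hb).symm, ite_self]
    · rw [if_neg (hne hz)]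
  · rw [Pi.add_apply, Matrix.mulVec_add, Pi.add_apply]
    by_cases hzv : z = v
    · subst hzv
      rw [lapMatrix_mulVec_apply_of_pendant h, lapMatrix_mulVec_apply_of_pendant h, hsingle,
        hsingle, hg.eq_zero b z (Or.inr (Set.mem_insert z S)),
        hg.eq_zero b u (Or.inr (Set.mem_insert_of_mem z hu)), if_pos rfl, if_neg (hne hu)]
      ring
    · have hneighbor : ∀ y ∈ G.neighborFinset z, y ≠ v := by
        rintro y hy rfl
        exact hz ((h z).mp ((G.mem_neighborFinset z y).mp hy).symm ▸ hu)
      rw [hg.lapMatrix_mulVec b z (by simp [hzv, hz]), G.lapMatrix_mulVec_apply, hsingle,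
        if_neg hzv, sum_eq_zero fun y hy ↦ (hsingle b y).trans (if_neg (hneighbor y hy))]
      ring

end Modification

section MoveEdge

variable {V : Type*} {G : SimpleGraph V} {u v w x y : V}

/-- The graph `G - vw + uw`. -/
def moveEdge (G : SimpleGraph V) (v w u : V) : SimpleGraph V :=
  SimpleGraph.fromEdgeSet ((G.edgeSet \ {s(v, w)}) ∪ {s(u, w)})

lemma moveEdge_adj (huw : u ≠ w) :
    (moveEdge G v w u).Adj x y ↔ G.Adj x y ∧ s(x, y) ≠ s(v, w) ∨ s(x, y) = s(u, w) := by
  have hne : s(x, y) = s(u, w) → x ≠ y := by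
    rintro h rfl
    rcases Sym2.eq_iff.mp h with ⟨rfl, rfl⟩ | ⟨rfl, rfl⟩ <;> exact huw rfl
  rw [moveEdge, SimpleGraph.fromEdgeSet_adj]
  simp only [Set.mem_union, Set.mem_sdiff, SimpleGraph.mem_edgeSet, Set.mem_singleton_iff]
  exact ⟨And.left, fun h ↦ ⟨h, h.elim (fun h ↦ h.1.ne) hne⟩⟩

lemma moveEdge_adj_of_ne (huw : u ≠ w) (hu : x ≠ u) (hv : x ≠ v) (hw : x ≠ w) :
    (moveEdge G v w u).Adj x y ↔ G.Adj x y := by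
  simp [moveEdge_adj huw, hu, hv, hw]

lemma moveEdge_adj_source (huw : u ≠ w) (hvu : v ≠ u) (hvw : v ≠ w) :
    (moveEdge G v w u).Adj v y ↔ G.Adj v y ∧ y ≠ w := by
  simp [moveEdge_adj huw, hvu, hvw]

lemma moveEdge_adj_common (huw : u ≠ w) (hvw : v ≠ w) :
    (moveEdge G v w u).Adj w y ↔ G.Adj w y ∧ y ≠ v ∨ y = u := by
  simp [moveEdge_adj huw, huw.symm, hvw.symm]

lemma ncard_edgeSet_moveEdge (hvw : G.Adj v w) (huw : u ≠ w) (hnadj : ¬ G.Adj u w) :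
    (moveEdge G v w u).edgeSet.ncard = G.edgeSet.ncard := by
  have hedge : (moveEdge G v w u).edgeSet = insert s(u, w) (G.edgeSet \ {s(v, w)}) := by
    ext e
    induction e with
    | _ x y => rw [SimpleGraph.mem_edgeSet, moveEdge_adj huw]; simp [or_comm]
  rw [hedge, Set.ncard_exchange (G.mem_edgeSet.not.mpr hnadj) (G.mem_edgeSet.mpr hvw)]

end MoveEdge

/-- The cycle `c` without its vertex `c 1`. -/
def skipOne {V : Type*} (c : ℕ → V) (i : ℕ) : V :=
  c (if i = 0 then 0 else i + 1)

namespace IsHangingCycle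

variable {V : Type*} {G : SimpleGraph V} {k : ℕ} {c : ℕ → V}
  (hc : IsHangingCycle G (k + 1) c)
include hc

lemma image_skipOne : skipOne c '' Set.Iio k = (c '' Set.Iio (k + 1)) \ {c 1} := by
  have hk := hc.three_le
  ext x
  constructor
  · rintro ⟨i, hi, rfl⟩
    rw [Set.mem_Iio] at hi
    refine ⟨Set.mem_image_of_mem c (by rw [Set.mem_Iio]; split_ifs <;> omega), ?_⟩
    exact hc.apply_ne (by split_ifs <;> omega) (by omega) (by split_ifs <;> omega)
  · rintro ⟨⟨_ | _ | i, hi, rfl⟩, hx⟩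
    · exact ⟨0, Set.mem_Iio.mpr (by omega), rfl⟩
    · exact absurd rfl hx
    · exact ⟨i + 1, Nat.lt_of_succ_lt_succ hi, rfl⟩

lemma moveEdge_adj_one (z : V) : (moveEdge G (c 1) (c 2) (c 0)).Adj (c 1) z ↔ z = c 0 := by
  have hk := hc.three_le
  have h02 : c 0 ≠ c 2 := hc.apply_ne (by omega) (by omega) (by omega)
  rw [moveEdge_adj_source h02 (hc.apply_ne (by omega) (by omega) (by omega))
    (hc.apply_ne (by omega) (by omega) (by omega)), hc.adj_iff 0 (by omega)]
  grind

lemma moveEdge_adj_of_ne {x : V} (h0 : x ≠ c 0) (h1 : x ≠ c 1) (h2 : x ≠ c 2) (z : V) :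
    (moveEdge G (c 1) (c 2) (c 0)).Adj x z ↔ G.Adj x z :=
  _root_.moveEdge_adj_of_ne (hc.apply_ne (by omega) hc.three_le (by omega)) h0 h1 h2

lemma moveEdge_adj_of_notMem {x : V} (hx : x ∉ c '' Set.Iio (k + 1)) (y : V) :
    (moveEdge G (c 1) (c 2) (c 0)).Adj x y ↔ G.Adj x y := by
  have hk := hc.three_le
  have hne {i : ℕ} (hi : i < k + 1) : x ≠ c i :=
    fun h ↦ hx (h ▸ Set.mem_image_of_mem c hi)
  exact hc.moveEdge_adj_of_ne (hne (by omega)) (hne (by omega)) (hne (by omega)) y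

lemma isDirichletGreen_moveEdge [Fintype V] [DecidableEq V] [DecidableRel G.Adj]
    [DecidableRel (moveEdge G (c 1) (c 2) (c 0)).Adj] {g : V → V → ℝ}
    (hg : IsDirichletGreen G (c '' Set.Iio (k + 1)) g) :
    IsDirichletGreen (moveEdge G (c 1) (c 2) (c 0)) (skipOne c '' Set.Iio k)
      (g + Pi.single (c 1) (Pi.single (c 1) 1)) := by
  have hk := hc.three_le
  rw [hc.image_skipOne]
  refine IsDirichletGreen.add_single_of_pendant (u := c 0) ?_ (by simp)
    ⟨hc.zero_mem_image, hc.apply_ne (by omega) (by omega) (by omega)⟩ hc.moveEdge_adj_one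
  rw [Set.insert_sdiff_self_of_mem (Set.mem_image_of_mem c (Set.mem_Iio.mpr (by omega)))]
  exact hg.congr fun x hx y ↦ (hc.moveEdge_adj_of_notMem hx y).symm

variable (hk : 3 ≤ k)
include hk

lemma moveEdge_adj_two (z : V) :
    (moveEdge G (c 1) (c 2) (c 0)).Adj (c 2) z ↔ z = c 0 ∨ z = c 3 := by
  have h31 : c 3 ≠ c 1 := hc.apply_ne (by omega) (by omega) (by omega)
  rw [moveEdge_adj_common (hc.apply_ne (by omega) (by omega) (by omega))
    (hc.apply_ne (by omega) (by omega) (by omega)), hc.adj_iff 1 (by omega)]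
  grind

lemma isHangingCycle_moveEdge :
    IsHangingCycle (moveEdge G (c 1) (c 2) (c 0)) k (skipOne c) where
  three_le := hk
  injOn i hi j hj hij := by
    rw [Set.mem_Iio] at hi hj
    rw [skipOne, skipOne, hc.apply_inj (by split_ifs <;> omega) (by split_ifs <;> omega)] at hij
    split_ifs at hij <;> omega
  closed := by
    rw [skipOne, if_neg (by omega)]
    exact hc.closed
  adj_iff i hi z := by
    rcases i with _ | i
    · exact hc.moveEdge_adj_two hk z
    · have hne {j : ℕ} (hj : j ≤ 2) : c (i + 2 + 1) ≠ c j :=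
        hc.apply_ne (by omega) (by omega) (by omega)
      exact (hc.moveEdge_adj_of_ne (hne (by omega)) (hne (by omega)) (hne le_rfl) z).trans
        (hc.adj_iff (i + 2) (by omega) z)

lemma ncard_edgeSet_moveEdge :
    (moveEdge G (c 1) (c 2) (c 0)).edgeSet.ncard = G.edgeSet.ncard := by
  have h12 : G.Adj (c 1) (c 2) := (hc.adj_iff 0 (by omega) (c 2)).mpr (Or.inr rfl)
  refine _root_.ncard_edgeSet_moveEdge h12 (hc.apply_ne (by omega) (by omega) (by omega)) ?_
  rw [G.adj_comm, hc.adj_iff 1 (by omega), not_or]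
  exact ⟨hc.apply_ne (by omega) (by omega) (by omega),
    hc.apply_ne (by omega) (by omega) (by omega)⟩

theorem degRes_sub_degRes_moveEdge [Fintype V] (hG : G.Connected) :
    degRes G - degRes (moveEdge G (c 1) (c 2) (c 0)) =
      ((Fintype.card V : ℝ) * (2 * k - 2) + G.edgeSet.ncard * (2 * k - 5)) / 3 -
        ((k : ℝ) ^ 2 + k - 2) := by
  classical
  obtain ⟨g, hg⟩ := exists_isDirichletGreen hG ⟨_, hc.zero_mem_image⟩
  have hdegree : resistanceSum (fun x ↦ ((moveEdge G (c 1) (c 2) (c 0)).degree x : ℝ)) g =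
      resistanceSum (fun x ↦ (G.degree x : ℝ)) g := by
    refine resistanceSum_congr ?_ fun x ↦ ?_
    · simp only [sum_degree_eq_two_mul_ncard_edgeSet, hc.ncard_edgeSet_moveEdge hk]
    · by_cases hx : x ∈ c '' Set.Iio (k + 1)
      · exact Or.inr fun y ↦ ⟨hg.eq_zero x y (Or.inl hx), hg.eq_zero y x (Or.inr hx)⟩
      · exact Or.inl (by rw [degree_congr (hc.moveEdge_adj_of_notMem hx)])
  have hdegree_one : (moveEdge G (c 1) (c 2) (c 0)).degree (c 1) = 1 := by
    rw [SimpleGraph.degree_eq_one_iff_existsUnique_adj]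
    exact ⟨c 0, (hc.moveEdge_adj_one _).mpr rfl, fun z ↦ (hc.moveEdge_adj_one z).mp⟩
  rw [hc.degRes_eq hg,
    (hc.isHangingCycle_moveEdge hk).degRes_eq (hc.isDirichletGreen_moveEdge hg),
    resistanceSum_add, hdegree, resistanceSum_single, hdegree_one,
    sum_degree_eq_two_mul_ncard_edgeSet, hc.ncard_edgeSet_moveEdge hk]
  push_cast
  ring

end IsHangingCycle

namespace IsHangingCycle

variable {V : Type*} [Fintype V] {G : SimpleGraph V} {k : ℕ} {c : ℕ → V}
  (hc : IsHangingCycle G k c)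
include hc

lemma sum_degree_image [DecidableEq V] [DecidableRel G.Adj] :
    ∑ x ∈ (range k).image c, G.degree x = 2 * (k - 1) + G.degree (c 0) := by
  obtain ⟨k, rfl⟩ := Nat.exists_eq_succ_of_ne_zero hc.ne_zero
  rw [sum_image (by simpa using hc.injOn), sum_range_succ',
    sum_congr rfl fun i hi ↦ hc.degree_eq_two (Nat.succ_lt_succ (mem_range.mp hi))]
  simp [mul_comm]

lemma degree_zero_le [DecidableEq V] [DecidableRel G.Adj] :
    G.degree (c 0) ≤ 2 + #((range k).image c)ᶜ := by
  have hsub : G.neighborFinset (c 0) ⊆ {c 1, c (k - 1)} ∪ ((range k).image c)ᶜ := by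
    intro y hy
    rw [mem_union, mem_compl, or_iff_not_imp_right, not_not]
    intro hyS
    rw [G.mem_neighborFinset] at hy
    obtain ⟨i, hi, rfl⟩ := exists_apply_succ_eq (by simpa using hyS) hy.ne'
    rw [mem_insert, mem_singleton]
    rcases (hc.adj_iff i hi (c 0)).mp hy.symm with h | h
    · left
      rw [← (hc.apply_inj (by omega) (by omega)).mp h]
    · right
      rcases (show i + 2 ≤ k from hi).lt_or_eq with hlt | rfl
      · exact absurd h (hc.apply_ne (by omega) hlt (by omega))
      · rfl
  rw [← G.card_neighborFinset_eq_degree]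
  exact (card_le_card hsub).trans ((card_union_le _ _).trans (by gcongr; exact card_le_two))

lemma degree_le_of_notMem [DecidableEq V] [DecidableRel G.Adj] {x : V}
    (hx : x ∈ ((range k).image c)ᶜ) : G.degree x ≤ #((range k).image c)ᶜ := by
  have hsub : G.neighborFinset x ⊆ insert (c 0) (((range k).image c)ᶜ.erase x) := by
    intro y hy
    rw [G.mem_neighborFinset] at hy
    rw [mem_insert, mem_erase, mem_compl, or_iff_not_imp_left]
    refine fun hy0 ↦ ⟨hy.ne', fun hyS ↦ hy0 (hc.eq_zero_of_adj ?_ (by simpa using hyS) hy)⟩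
    simpa using hx
  rw [← G.card_neighborFinset_eq_degree]
  exact (card_le_card hsub).trans ((card_insert_le _ _).trans (card_erase_add_one hx).le)

theorem add_two_le_card (hE : Fintype.card V < G.edgeSet.ncard) : k + 2 ≤ Fintype.card V := by
  classical
  set T := (range k).image c
  have hT : #T = k := by rw [card_image_of_injOn (by simpa using hc.injOn), card_range]
  have hcompl : #T + #Tᶜ = Fintype.card V := card_add_card_compl T
  have hoff : ∑ x ∈ Tᶜ, G.degree x ≤ #Tᶜ * #Tᶜ :=
    sum_le_card_nsmul _ _ _ fun x hx ↦ hc.degree_le_of_notMem hx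
  have hedges : ∑ x ∈ T, G.degree x + ∑ x ∈ Tᶜ, G.degree x = 2 * G.edgeSet.ncard := by
    rw [sum_add_sum_compl]
    exact_mod_cast sum_degree_eq_two_mul_ncard_edgeSet G
  rw [hc.sum_degree_image] at hedges
  have hzero : G.degree (c 0) ≤ 2 + #Tᶜ := hc.degree_zero_le
  have hk := hc.three_le
  by_contra! hlt
  have hsmall : #Tᶜ = 0 ∨ #Tᶜ = 1 := by omega
  rcases hsmall with h | h <;> rw [h] at hoff <;> omega

end IsHangingCycle

section CycleSubgraph

variable {V : Type*} {G : SimpleGraph V} {u v w : V}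

lemma isCycleSubgraph_toSubgraph {p : G.Walk u u} (hp : p.IsCycle) :
    IsCycleSubgraph p.toSubgraph :=
  ⟨p.toSubgraph_connected.coe, fun _ hx ↦
    hp.ncard_neighborSet_toSubgraph_eq_two (p.mem_verts_toSubgraph.mp hx)⟩

lemma injOn_getVert_Iio_of_isCycle {p : G.Walk u u} (hp : p.IsCycle) :
    Set.InjOn p.getVert (Set.Iio p.length) :=
  hp.getVert_injOn'.mono fun _ hi ↦ Nat.le_sub_one_of_lt hi

lemma ncard_verts_toSubgraph_of_isCycle {p : G.Walk u u} (hp : p.IsCycle) :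
    p.toSubgraph.verts.ncard = p.length := by
  have hlen := hp.three_le_length
  have himage : p.toSubgraph.verts = p.getVert '' Set.Iio p.length := by
    ext x
    rw [p.mem_verts_toSubgraph, p.mem_support_iff_exists_getVert]
    refine ⟨fun ⟨i, hix, hi⟩ ↦ ?_, fun ⟨i, hi, hix⟩ ↦ ⟨i, hix, le_of_lt hi⟩⟩
    rcases hi.lt_or_eq with hi | rfl
    · exact ⟨i, hi, hix⟩
    · exact ⟨0, Set.mem_Iio.mpr (by omega), by rw [← hix, p.getVert_zero, p.getVert_length]⟩
  rw [himage, (injOn_getVert_Iio_of_isCycle hp).ncard_image, ← coe_range, Set.ncard_coe_finset,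
    card_range]

lemma isHangingCycle_getVert {p : G.Walk u u} (hp : p.IsCycle) (hInd : p.toSubgraph.IsInduced)
    (huniq : ∀ x ∈ p.toSubgraph.verts, (∃ y ∉ p.toSubgraph.verts, G.Adj x y) → x = u) :
    IsHangingCycle G p.length p.getVert where
  three_le := hp.three_le_length
  injOn := injOn_getVert_Iio_of_isCycle hp
  closed := by rw [p.getVert_length, p.getVert_zero]
  adj_iff i hi z := by
    have hmem : p.getVert (i + 1) ∈ p.toSubgraph.verts :=
      p.mem_verts_toSubgraph.mpr (p.getVert_mem_support _)
    have hne : p.getVert (i + 1) ≠ u := by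
      rw [ne_eq, hp.getVert_endpoint_iff hi.le]
      omega
    have hadj : G.Adj (p.getVert (i + 1)) z ↔ z ∈ p.toSubgraph.neighborSet (p.getVert (i + 1)) :=
      ⟨fun h ↦ hInd hmem (by_contra fun hz ↦ hne (huniq _ hmem ⟨z, hz, h⟩)) h,
        p.toSubgraph.adj_sub⟩
    rw [hadj, hp.neighborSet_toSubgraph_internal (Nat.succ_ne_zero i) hi]
    rfl

namespace IsCycleSubgraph

variable {H C : G.Subgraph}

lemma exists_adj (hC : IsCycleSubgraph C) (hu : u ∈ C.verts) : ∃ v, C.Adj u v :=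
  Set.nonempty_of_ncard_ne_zero (hC.2 u hu ▸ two_ne_zero)

variable [Finite V]

lemma eq_of_le (hH : IsCycleSubgraph H) (hC : IsCycleSubgraph C) (hle : H ≤ C) : H = C := by
  have hnbr : ∀ x ∈ H.verts, H.neighborSet x = C.neighborSet x := fun x hx ↦
    Set.eq_of_subset_of_ncard_le (fun _ h ↦ hle.2 h)
      ((hC.2 x (hle.1 hx)).trans (hH.2 x hx).symm).le
  have hverts : C.verts ⊆ H.verts := by
    intro y hy
    by_contra hyH
    obtain ⟨x, hx⟩ := hH.1.nonempty
    obtain ⟨p⟩ := hC.1 ⟨x, hle.1 hx⟩ ⟨y, hy⟩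
    obtain ⟨d, -, hfst, hsnd⟩ := p.exists_boundary_dart {z | (z : V) ∈ H.verts} hx hyH
    have hd : (d.snd : V) ∈ C.neighborSet d.fst := d.adj
    rw [← hnbr _ hfst] at hd
    exact hsnd (H.edge_vert hd.symm)
  refine le_antisymm hle ⟨hverts, fun x y hxy ↦ ?_⟩
  have hy : y ∈ C.neighborSet x := hxy
  rwa [← hnbr x (hverts (C.edge_vert hxy))] at hy

lemma exists_isCycle (hC : IsCycleSubgraph C) (huv : C.Adj u v) :
    ∃ p : G.Walk u u, p.IsCycle ∧ p.toSubgraph = C ∧ p.snd = v := by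
  classical
  have := Fintype.ofFinite V
  have hcycles : C.spanningCoe.IsCycles := fun x ⟨y, hy⟩ ↦ hC.2 x (C.edge_vert hy)
  obtain ⟨q, hq, -⟩ := hcycles.exists_cycle_toSubgraph_verts_eq_connectedComponentSupp
    (c := C.spanningCoe.connectedComponentMk u) rfl ⟨v, huv⟩
  obtain ⟨p, hp, hsnd, -⟩ := hq.exists_isCycle_snd_verts_eq
    ((hq.adj_toSubgraph_iff_of_isCycles hcycles q.start_mem_verts_toSubgraph v).mpr huv)
  have hp' : (p.mapLe C.spanningCoe_le).IsCycle := hp.mapLe _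
  refine ⟨p.mapLe C.spanningCoe_le, hp', (isCycleSubgraph_toSubgraph hp').eq_of_le hC ?_, ?_⟩
  · rw [SimpleGraph.Walk.toSubgraph_le_iff hp'.not_nil]
    intro e he
    rw [SimpleGraph.Walk.mem_edgeSet, SimpleGraph.Walk.edges_mapLe_eq_edges] at he
    exact C.edgeSet_spanningCoe ▸ p.edges_subset_edgeSet he
  · rw [← hsnd]
    exact p.getVert_map _ 1

lemma exists_adj_not_adj (hC : IsCycleSubgraph C) {T : SimpleGraph V} (hT : T.IsAcyclic) :
    ∃ x y, C.Adj x y ∧ ¬ T.Adj x y := by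
  by_contra! hle
  obtain ⟨u, hu⟩ := hC.1.nonempty
  obtain ⟨v, huv⟩ := hC.exists_adj hu
  obtain ⟨p, hp, rfl, -⟩ := hC.exists_isCycle huv
  refine hT _ (hp.transfer (H := T) fun e ↦ ?_)
  induction e with
  | _ x y => exact fun he ↦ hle x y (SimpleGraph.Walk.adj_toSubgraph_iff_mem_edges.mpr he)

end IsCycleSubgraph

namespace IsCactus

variable [Finite V] {C D : G.Subgraph} (hG : IsCactus G)
include hG

lemma eq_of_mem_of_mem (hC : IsCycleSubgraph C) (hD : IsCycleSubgraph D) (huv : u ≠ v)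
    (huC : u ∈ C.verts) (hvC : v ∈ C.verts) (huD : u ∈ D.verts) (hvD : v ∈ D.verts) : C = D := by
  by_contra hne
  have hsub : {u, v} ⊆ C.verts ∩ D.verts := Set.pair_subset ⟨huC, huD⟩ ⟨hvC, hvD⟩
  have hcard := (Set.ncard_le_ncard hsub).trans (hG.2 C D hC hD hne)
  rw [Set.ncard_pair huv] at hcard
  omega

-- A chord would close one of the two arcs between its ends to a second cycle through both.
lemma isInduced (hC : IsCycleSubgraph C) : C.IsInduced := by
  classical
  intro a ha b hb hab
  obtain ⟨v, hav⟩ := hC.exists_adj ha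
  obtain ⟨p, hp, rfl, -⟩ := hC.exists_isCycle hav
  by_contra hnot
  have hbp : b ∈ p.support := p.mem_verts_toSubgraph.mp hb
  have hcycle : (SimpleGraph.Walk.cons hab.symm (p.takeUntil b hbp)).IsCycle := by
    refine (SimpleGraph.Walk.cons_isCycle_iff _ _).mpr ⟨hp.isPath_takeUntil hbp, fun he ↦ hnot ?_⟩
    exact (SimpleGraph.Walk.adj_toSubgraph_iff_mem_edges.mpr
      (p.edges_takeUntil_subset_edges hbp he)).symm
  have hba : (SimpleGraph.Walk.cons hab.symm (p.takeUntil b hbp)).toSubgraph.Adj b a := by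
    rw [SimpleGraph.Walk.adj_toSubgraph_iff_mem_edges, SimpleGraph.Walk.edges_cons]
    exact List.mem_cons_self
  have heq := hG.eq_of_mem_of_mem hC (isCycleSubgraph_toSubgraph hcycle) hab.ne ha hb
    hba.snd_mem hba.fst_mem
  exact hnot (heq ▸ hba.symm)

theorem card_lt_ncard_edgeSet (ht : 2 ≤ numCycles G) : Nat.card V < G.edgeSet.ncard := by
  obtain ⟨T, hTG, hT⟩ := hG.1.exists_isTree_le
  obtain ⟨C, D, hC, hD, hCD⟩ := (Set.one_lt_ncard_iff (Set.finite_of_ncard_pos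
    (Nat.zero_lt_of_lt ht))).mp ht
  obtain ⟨a, b, hab, habT⟩ := IsCycleSubgraph.exists_adj_not_adj hC hT.isAcyclic
  obtain ⟨x, y, hxy, hxyT⟩ := IsCycleSubgraph.exists_adj_not_adj hD hT.isAcyclic
  have hne : s(a, b) ≠ s(x, y) := by
    intro h
    have hD_ab : D.Adj a b := by rwa [← D.mem_edgeSet, h]
    exact hCD (hG.eq_of_mem_of_mem hC hD hab.ne hab.fst_mem hab.snd_mem hD_ab.fst_mem
      hD_ab.snd_mem)
  have hsub : insert s(a, b) (insert s(x, y) T.edgeSet) ⊆ G.edgeSet :=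
    Set.insert_subset hab.adj_sub (Set.insert_subset hxy.adj_sub (SimpleGraph.edgeSet_mono hTG))
  have hcard := Set.ncard_le_ncard hsub
  have hxyT' : s(x, y) ∉ T.edgeSet := hxyT
  have habT' : s(a, b) ∉ insert s(x, y) T.edgeSet := fun h ↦ h.elim hne habT
  rw [Set.ncard_insert_of_notMem habT', Set.ncard_insert_of_notMem hxyT'] at hcard
  have htree := (SimpleGraph.isTree_iff_connected_and_card.mp hT).2
  rw [Nat.card_coe_set_eq] at htree
  omega

end IsCactus

end CycleSubgraph

theorem stmt_5_general {V : Type*} [Finite V] {G : SimpleGraph V} (hG : G.Connected)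
    (hE : Nat.card V < G.edgeSet.ncard) {C : G.Subgraph} (hC : IsCycleSubgraph C)
    (hInd : C.IsInduced) (hh : 4 ≤ C.verts.ncard) {u v w : V}
    (huniq : ∀ x ∈ C.verts, (∃ y ∉ C.verts, G.Adj x y) → x = u)
    (huv : C.Adj u v) (hvw : C.Adj v w) (hwu : w ≠ u) :
    degRes (moveEdge G v w u) < degRes G := by
  have := Fintype.ofFinite V
  rw [Nat.card_eq_fintype_card] at hE
  obtain ⟨p, hp, rfl, hpv⟩ := hC.exists_isCycle huv
  have hc := isHangingCycle_getVert hp hInd huniq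
  rw [ncard_verts_toSubgraph_of_isCycle hp] at hh
  have h0 : p.getVert 0 = u := p.getVert_zero
  have h1 : p.getVert 1 = v := hpv
  have h2 : p.getVert 2 = w := by
    have hw := (hc.adj_iff 0 (by omega) w).mp (h1 ▸ hvw.adj_sub)
    exact (hw.resolve_left (h0.symm ▸ hwu)).symm
  obtain ⟨k, hk⟩ : ∃ k, p.length = k + 1 := ⟨p.length - 1, by omega⟩
  rw [hk] at hc hh
  have hdiff := hc.degRes_sub_degRes_moveEdge (by omega) hG
  rw [h0, h1, h2] at hdiff
  have hN : (k : ℝ) + 3 ≤ Fintype.card V := by exact_mod_cast hc.add_two_le_card hE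
  have hm : (Fintype.card V : ℝ) + 1 ≤ G.edgeSet.ncard := by exact_mod_cast hE
  have hk3 : (3 : ℝ) ≤ k := by exact_mod_cast Nat.le_of_succ_le_succ hh
  have hpos : 0 < ((Fintype.card V : ℝ) * (2 * k - 2) + G.edgeSet.ncard * (2 * k - 5)) / 3 -
      ((k : ℝ) ^ 2 + k - 2) := by
    nlinarith
  linarith

/-- Correction of Lemma 7 of Du–Su–Tu–Gutman: shrinking the cycle `C_h` (with unique
attachment vertex `u`, and `uv, vw` edges of the cycle) by replacing the edge `vw`
with `uw` strictly decreases the degree resistance distance. -/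
theorem stmt_5 {V : Type*} [Finite V] (n t h : ℕ) (ht : 3 ≤ t) (hh : 4 ≤ h)
    (G : SimpleGraph V) (hG : MemCact n t G)
    (C : G.Subgraph) (hC : IsCycleSubgraph C) (hcard : C.verts.ncard = h)
    (u v w : V) (huC : u ∈ C.verts)
    (hout : ∃ y ∉ C.verts, G.Adj u y)
    (huniq : ∀ x ∈ C.verts, (∃ y ∉ C.verts, G.Adj x y) → x = u)
    (huv : C.Adj u v) (hvw : C.Adj v w) (hwu : w ≠ u) :
    degRes (SimpleGraph.fromEdgeSet ((G.edgeSet \ {s(v, w)}) ∪ {s(u, w)})) < degRes G := by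
  obtain ⟨hcactus, -, rfl⟩ := hG
  exact stmt_5_general hcactus.1 (hcactus.card_lt_ncard_edgeSet (by omega)) hC
    (hcactus.isInduced hC) (hcard ▸ hh) huniq huv hvw hwu
end

section
/- For integers n and t with n ≥ 2t + 3 and t ≥ 1, D_R(G3) − D_R(G⁰(n,t)) = 4n + 2t − 12, where G3 is the cactus on n vertices consisting of t triangles, n − 2t − 3 pendent edges, and one pendent path of length 2, all attached at a single common vertex v1. -/
open Finset

/-- `G3`: `t` triangles, `n - 2t - 3` pendent edges, and one pendent path of
length 2 (through `2t+1` to `2t+2`), all attached at the common vertex `0`. -/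
def G3g (n t : ℕ) : SimpleGraph (Fin n) :=
  SimpleGraph.fromRel (fun a b =>
    (a.val = 0 ∧ b.val ≠ 2 * t + 2) ∨
    (Odd a.val ∧ b.val = a.val + 1 ∧ b.val ≤ 2 * t) ∨
    (a.val = 2 * t + 1 ∧ b.val = 2 * t + 2))

/-- `G4`: `t` triangles and `n - 2t - 2` pendent edges at the common vertex `0`,
together with one pendent edge (to `2t+1`) attached at the triangle vertex `1`. -/
def G4g (n t : ℕ) : SimpleGraph (Fin n) :=
  SimpleGraph.fromRel (fun a b =>
    (a.val = 0 ∧ b.val ≠ 2 * t + 1) ∨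
    (Odd a.val ∧ b.val = a.val + 1 ∧ b.val ≤ 2 * t) ∨
    (a.val = 1 ∧ b.val = 2 * t + 1))

/-- `G5`: `t - 1` triangles, one quadrilateral `C₄` (on `0, 2t-1, 2t, 2t+1`), and
`n - 2t - 2` pendent edges, all sharing the common vertex `0`. -/
def G5g (n t : ℕ) : SimpleGraph (Fin n) :=
  SimpleGraph.fromRel (fun a b =>
    (a.val = 0 ∧ b.val ≠ 2 * t) ∨
    (Odd a.val ∧ b.val = a.val + 1 ∧ b.val ≤ 2 * t - 2) ∨
    (a.val = 2 * t - 1 ∧ b.val = 2 * t) ∨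
    (a.val = 2 * t ∧ b.val = 2 * t + 1))

/-- `G6`: `t - 1` triangles, one quadrilateral `C₄` (on `0, 2t-1, 2t, 2t+1`), and
`n - 2t - 3` pendent edges at the common vertex `0`, together with one pendent edge
(to `2t+2`) attached at the quadrilateral vertex `2t-1`, which is adjacent to `0`. -/
def G6g (n t : ℕ) : SimpleGraph (Fin n) :=
  SimpleGraph.fromRel (fun a b =>
    (a.val = 0 ∧ b.val ≠ 2 * t ∧ b.val ≠ 2 * t + 2) ∨
    (Odd a.val ∧ b.val = a.val + 1 ∧ b.val ≤ 2 * t - 2) ∨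
    (a.val = 2 * t - 1 ∧ (b.val = 2 * t ∨ b.val = 2 * t + 2)) ∨
    (a.val = 2 * t ∧ b.val = 2 * t + 1))

/-- `G7`: `t - 1` triangles, one quadrilateral `C₄` (on `0, 2t-1, 2t, 2t+1`), and
`n - 2t - 3` pendent edges at the common vertex `0`, together with one pendent edge
(to `2t+2`) attached at the quadrilateral vertex `2t`, which is opposite to `0`. -/
def G7g (n t : ℕ) : SimpleGraph (Fin n) :=
  SimpleGraph.fromRel (fun a b =>
    (a.val = 0 ∧ b.val ≠ 2 * t ∧ b.val ≠ 2 * t + 2) ∨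
    (Odd a.val ∧ b.val = a.val + 1 ∧ b.val ≤ 2 * t - 2) ∨
    (a.val = 2 * t - 1 ∧ b.val = 2 * t) ∨
    (a.val = 2 * t ∧ (b.val = 2 * t + 1 ∨ b.val = 2 * t + 2)))

/-- `G8`: `t - 2` triangles, two quadrilaterals `C₄` (on `0, 2t-3, 2t-2, 2t-1` and
on `0, 2t, 2t+1, 2t+2`), and `n - 2t - 3` pendent edges, all sharing the common
vertex `0`. -/
def G8g (n t : ℕ) : SimpleGraph (Fin n) :=
  SimpleGraph.fromRel (fun a b =>
    (a.val = 0 ∧ b.val ≠ 2 * t - 2 ∧ b.val ≠ 2 * t + 1) ∨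
    (Odd a.val ∧ b.val = a.val + 1 ∧ b.val ≤ 2 * t - 4) ∨
    (a.val = 2 * t - 3 ∧ b.val = 2 * t - 2) ∨
    (a.val = 2 * t - 2 ∧ b.val = 2 * t - 1) ∨
    (a.val = 2 * t ∧ b.val = 2 * t + 1) ∨
    (a.val = 2 * t + 1 ∧ b.val = 2 * t + 2))

/-- `G9`: `t - 1` triangles, one quadrilateral `C₄` (on `0, 2t-1, 2t, 2t+1`), and
`n - 2t - 3` pendent edges at the common vertex `0`, together with one pendent edge
(to `2t+2`) attached at the non-central triangle vertex `1`. -/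
def G9g (n t : ℕ) : SimpleGraph (Fin n) :=
  SimpleGraph.fromRel (fun a b =>
    (a.val = 0 ∧ b.val ≠ 2 * t ∧ b.val ≠ 2 * t + 2) ∨
    (Odd a.val ∧ b.val = a.val + 1 ∧ b.val ≤ 2 * t - 2) ∨
    (a.val = 2 * t - 1 ∧ b.val = 2 * t) ∨
    (a.val = 2 * t ∧ b.val = 2 * t + 1) ∨
    (a.val = 1 ∧ b.val = 2 * t + 2))

/-- `G10`: `t - 1` triangles, one pentagon `C₅` (on `0, 2t-1, 2t, 2t+1, 2t+2`), and
`n - 2t - 3` pendent edges, all sharing the common vertex `0`. -/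
def G10g (n t : ℕ) : SimpleGraph (Fin n) :=
  SimpleGraph.fromRel (fun a b =>
    (a.val = 0 ∧ b.val ≠ 2 * t ∧ b.val ≠ 2 * t + 1) ∨
    (Odd a.val ∧ b.val = a.val + 1 ∧ b.val ≤ 2 * t - 2) ∨
    (a.val = 2 * t - 1 ∧ b.val = 2 * t) ∨
    (a.val = 2 * t ∧ b.val = 2 * t + 1) ∨
    (a.val = 2 * t + 1 ∧ b.val = 2 * t + 2))

/-!
`G3` arises from `G⁰(n,t)` by moving the pendent edge at one leaf `q` of the center `c` to another
leaf `p`. In any connected graph such a move changes only the resistances at `q`, where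
`R'(q,v) = R(p,v) + 1` while `R(q,v) = R(c,v) + 1`, and transfers one unit of degree from `c`
to `p`. Summing `d(u) * Kf_u` over all vertices then gives
`D_R' - D_R = D_p - D_c + 2 * (Kf_p - Kf_c) - 4 * R(p,c)`, and for a leaf `p` at `c` in a graph with
`n` vertices and `m` edges one has `D_p = D_c + 2m - 2` and `Kf_p = Kf_c + n - 2`.

The resistance identities are read off unit potentials, that is, solutions of `L f = e_v - e_u`:
by Cramer's rule for the Laplacian grounded at `u`, the determinant quotient defining `R(u,v)` is
the voltage `f v - f u`.
-/

open Matrix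

section GroundedLaplacian

lemma det_eq_det_submatrix_of_col_eq_single {V R : Type*} [Fintype V] [DecidableEq V] [CommRing R]
    (M : Matrix V V R) (P : V → Prop) [DecidablePred P]
    (hM : ∀ j, ¬ P j → M.col j = Pi.single j 1) :
    M.det = (M.submatrix ((↑) : {w // P w} → V) (↑)).det := by
  have hM' : ∀ i j, ¬ P j → M i j = if i = j then 1 else 0 :=
    fun i j hj => (congrFun (hM j hj) i).trans (Pi.single_apply ..)
  have hblock : M.toSquareBlockProp (fun i => ¬ P i) = 1 := by
    ext i j
    simp only [toSquareBlockProp_def, of_apply, hM' i j j.2, one_apply, Subtype.ext_iff]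
  rw [twoBlockTriangular_det' M P, hblock, det_one, mul_one]
  · rfl
  · rintro i hi j hj
    rw [hM' i j hj, if_neg (by rintro rfl; exact hj hi)]

variable {V : Type*} [Fintype V] [DecidableEq V] (G : SimpleGraph V) [DecidableRel G.Adj]

/-- The Laplacian matrix of `G` with the column of `u` replaced by the indicator of `u`. In contrast
to the Laplacian it is invertible for connected `G`, and it keeps the index type `V` although its
determinant is the principal minor of the Laplacian away from `u`. -/
def groundedLapMatrix (u : V) : Matrix V V ℝ :=
  (G.lapMatrix ℝ).updateCol u (Pi.single u 1)

lemma groundedLapMatrix_mulVec (u : V) (g : V → ℝ) :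
    groundedLapMatrix G u *ᵥ g =
      G.lapMatrix ℝ *ᵥ Function.update g u 0 + g u • Pi.single u 1 := by
  ext i
  simp only [groundedLapMatrix, mulVec, dotProduct, Pi.add_apply, Pi.smul_apply, smul_eq_mul,
    Fintype.sum_eq_add_sum_compl u, updateCol_self, Function.update_self, mul_zero, zero_add]
  rw [add_comm, mul_comm]
  congr 1
  refine sum_congr rfl fun x hx => ?_
  have hx : x ≠ u := by simpa using hx
  rw [updateCol_ne hx, Function.update_of_ne hx]

lemma det_groundedLapMatrix (u : V) :
    (groundedLapMatrix G u).det =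
      ((G.lapMatrix ℝ).submatrix ((↑) : {w // w ≠ u} → V) (↑)).det := by
  rw [det_eq_det_submatrix_of_col_eq_single (groundedLapMatrix G u) (· ≠ u)]
  · congr 1
    ext i j
    simp [groundedLapMatrix, j.2]
  · intro j hj
    obtain rfl : j = u := not_not.mp hj
    ext i
    simp [groundedLapMatrix]

lemma cramer_groundedLapMatrix_single_self {u v : V} (huv : u ≠ v) :
    (groundedLapMatrix G u).cramer (Pi.single v 1) v =
      ((G.lapMatrix ℝ).submatrix ((↑) : {w // w ≠ u ∧ w ≠ v} → V) (↑)).det := by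
  rw [cramer_apply, det_eq_det_submatrix_of_col_eq_single _ (fun w => w ≠ u ∧ w ≠ v)]
  · congr 1
    ext i j
    simp [groundedLapMatrix, j.2.1, j.2.2]
  · intro j hj
    ext i
    by_cases hjv : j = v
    · simp [hjv]
    · obtain rfl : j = u := by tauto
      simp [groundedLapMatrix, huv]

lemma effRes_eq_cramer_div_det {u v : V} (huv : u ≠ v) :
    effRes G u v =
      (groundedLapMatrix G u).cramer (Pi.single v 1) v / (groundedLapMatrix G u).det := by
  rw [cramer_groundedLapMatrix_single_self G huv, det_groundedLapMatrix]
  simp only [effRes, if_neg huv]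
  convert rfl

lemma effRes_self {V : Type*} [Finite V] (G : SimpleGraph V) (u : V) : effRes G u u = 0 :=
  if_pos rfl

variable {G}

lemma det_groundedLapMatrix_ne_zero (hG : G.Connected) (u : V) :
    (groundedLapMatrix G u).det ≠ 0 := by
  intro hdet
  obtain ⟨g, hg_ne, hg⟩ := exists_mulVec_eq_zero_iff.mpr hdet
  rw [groundedLapMatrix_mulVec] at hg
  set g₀ := Function.update g u 0 with hg₀
  have henergy : toLinearMap₂' ℝ (G.lapMatrix ℝ) g₀ g₀ = 0 := by
    rw [toLinearMap₂'_apply', eq_neg_of_add_eq_zero_left hg]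
    simp [hg₀]
  have hg₀_zero : g₀ = 0 := by
    ext x
    rw [(G.lapMatrix_toLinearMap₂'_apply'_eq_zero_iff_forall_reachable g₀).mp henergy x u
      (hG.preconnected x u), hg₀, Function.update_self, Pi.zero_apply]
  have hgu : g u = 0 := by simpa [hg₀_zero] using congrFun hg u
  exact hg_ne (by rw [← hg₀_zero, hg₀, ← hgu, Function.update_eq_self])

lemma sum_lapMatrix_mulVec_eq_zero {R : Type*} [CommRing R] (f : V → R) :
    ∑ x, (G.lapMatrix R *ᵥ f) x = 0 := by
  have hsymm : (fun _ => 1) ᵥ* G.lapMatrix R = 0 := by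
    rw [← mulVec_transpose, (G.isSymm_lapMatrix (R := R)).eq, G.lapMatrix_mulVec_const_eq_zero]
  have h := dotProduct_mulVec (fun _ => 1) (G.lapMatrix R) f
  rwa [hsymm, zero_dotProduct, dotProduct, Fintype.sum_congr _ _ fun _ => one_mul _] at h

end GroundedLaplacian

section Potential

variable {V : Type*} [Fintype V] [DecidableEq V] {G : SimpleGraph V} [DecidableRel G.Adj]

variable (G) in
/-- `f` is an electric potential on `G` carrying a unit current that enters at `v` and leaves
at `u`. -/
def IsUnitPotential (u v : V) (f : V → ℝ) : Prop :=
  G.lapMatrix ℝ *ᵥ f = Pi.single v 1 - Pi.single u 1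

lemma exists_isUnitPotential (hG : G.Connected) (u v : V) : ∃ f, IsUnitPotential G u v f := by
  have hunit := (det_groundedLapMatrix_ne_zero hG u).isUnit
  set g := (groundedLapMatrix G u)⁻¹ *ᵥ Pi.single v 1 with hg
  have hLg : G.lapMatrix ℝ *ᵥ Function.update g u 0 + g u • Pi.single u 1 = Pi.single v 1 := by
    rw [← groundedLapMatrix_mulVec, hg, mulVec_mulVec, mul_nonsing_inv _ hunit, one_mulVec]
  have hgu : g u = 1 := by
    simpa [sum_add_distrib, sum_lapMatrix_mulVec_eq_zero, Pi.single_apply] using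
      congrArg (fun h : V → ℝ => ∑ x, h x) hLg
  exact ⟨Function.update g u 0, eq_sub_of_add_eq (by simpa [hgu] using hLg)⟩

lemma IsUnitPotential.effRes_eq {u v : V} {f : V → ℝ} (hf : IsUnitPotential G u v f)
    (hG : G.Connected) : effRes G u v = f v - f u := by
  obtain rfl | huv := eq_or_ne u v
  · rw [effRes_self, sub_self]
  have hdet := det_groundedLapMatrix_ne_zero hG u
  set g : V → ℝ := Function.update (f - fun _ => f u) u 1 with hg
  have hBg : groundedLapMatrix G u *ᵥ g = Pi.single v 1 := by
    have hconst : G.lapMatrix ℝ *ᵥ (fun _ => f u) = 0 :=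
      G.lapMatrix_mulVec_eq_zero_iff_forall_adj.mpr fun _ _ _ => rfl
    have hupdate : Function.update g u 0 = f - fun _ => f u := by
      rw [hg, Function.update_idem, Function.update_eq_self_iff, Pi.sub_apply, sub_self]
    rw [groundedLapMatrix_mulVec, hupdate, mulVec_sub, hconst, hf]
    simp [hg]
  rw [effRes_eq_cramer_div_det G huv, ← hBg, cramer_eq_adjugate_mulVec, mulVec_mulVec,
    adjugate_mul, smul_mulVec, one_mulVec, Pi.smul_apply, smul_eq_mul,
    mul_div_cancel_left₀ _ hdet, hg, Function.update_of_ne huv.symm, Pi.sub_apply]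

lemma IsUnitPotential.neg {u v : V} {f : V → ℝ} (hf : IsUnitPotential G u v f) :
    IsUnitPotential G v u (-f) := by
  rw [IsUnitPotential, mulVec_neg, hf, neg_sub]

lemma effRes_comm {V : Type*} [Finite V] {G : SimpleGraph V} (hG : G.Connected) (u v : V) :
    effRes G u v = effRes G v u := by
  classical
  have := Fintype.ofFinite V
  obtain ⟨f, hf⟩ := exists_isUnitPotential hG u v
  rw [hf.effRes_eq hG, hf.neg.effRes_eq hG, Pi.neg_apply, Pi.neg_apply]
  ring

end Potential

section SupEdge

variable {V : Type*} [Fintype V] [DecidableEq V] (H : SimpleGraph V) [DecidableRel H.Adj] {a b : V}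

lemma sum_neighborFinset_sup_edge {M : Type*} [AddCommMonoid M] (hab : a ≠ b) (hadj : ¬ H.Adj a b)
    (F : V → M) (x : V) :
    ∑ y ∈ (H ⊔ SimpleGraph.edge a b).neighborFinset x, F y =
      ∑ y ∈ H.neighborFinset x, F y +
        ((if x = a then F b else 0) + if x = b then F a else 0) := by
  have hsplit (y : V) : (if (H ⊔ SimpleGraph.edge a b).Adj x y then F y else 0) =
      (if H.Adj x y then F y else 0) +
        ((if y = b then if x = a then F b else 0 else 0) +
          if y = a then if x = b then F a else 0 else 0) := by
    have hadj' := mt SimpleGraph.Adj.symm hadj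
    simp only [SimpleGraph.sup_adj, SimpleGraph.edge_adj]
    grind
  simp only [SimpleGraph.neighborFinset_eq_filter, sum_filter, hsplit, sum_add_distrib,
    Fintype.sum_ite_eq']

lemma degree_sup_edge (hab : a ≠ b) (hadj : ¬ H.Adj a b) (x : V) :
    (H ⊔ SimpleGraph.edge a b).degree x =
      H.degree x + ((if x = a then 1 else 0) + if x = b then 1 else 0) := by
  simpa only [← SimpleGraph.card_neighborFinset_eq_degree, card_eq_sum_ones] using
    sum_neighborFinset_sup_edge H hab hadj (fun _ => 1) x

lemma lapMatrix_sup_edge_mulVec {R : Type*} [Ring R] (hab : a ≠ b) (hadj : ¬ H.Adj a b)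
    (f : V → R) :
    (H ⊔ SimpleGraph.edge a b).lapMatrix R *ᵥ f =
      H.lapMatrix R *ᵥ f + (f a - f b) • (Pi.single a 1 - Pi.single b 1) := by
  ext x
  simp only [SimpleGraph.lapMatrix_mulVec_apply, degree_sup_edge H hab hadj,
    sum_neighborFinset_sup_edge H hab hadj, Pi.add_apply, Pi.smul_apply, Pi.sub_apply,
    Pi.single_apply, smul_eq_mul, Nat.cast_add, Nat.cast_ite,
    Nat.cast_one, Nat.cast_zero]
  obtain rfl | hxa := eq_or_ne x a
  · simp only [if_true, if_neg hab]
    noncomm_ring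
  obtain rfl | hxb := eq_or_ne x b
  · simp only [if_true, if_neg hxa]
    noncomm_ring
  · simp only [if_neg hxa, if_neg hxb]
    noncomm_ring

variable {H}

lemma lapMatrix_mulVec_apply_of_isIsolated {R : Type*} [NonAssocRing R] {q : V}
    (hq : H.IsIsolated q) (f : V → R) : (H.lapMatrix R *ᵥ f) q = 0 := by
  rw [SimpleGraph.lapMatrix_mulVec_apply, hq.degree_eq_zero, hq.neighborFinset_eq_empty]
  simp

lemma lapMatrix_mulVec_update_of_isIsolated {R : Type*} [NonAssocRing R] {q : V}
    (hq : H.IsIsolated q) (f : V → R) (s : R) :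
    H.lapMatrix R *ᵥ Function.update f q s = H.lapMatrix R *ᵥ f := by
  ext x
  obtain rfl | hxq := eq_or_ne x q
  · rw [lapMatrix_mulVec_apply_of_isIsolated hq, lapMatrix_mulVec_apply_of_isIsolated hq]
  · rw [SimpleGraph.lapMatrix_mulVec_apply, SimpleGraph.lapMatrix_mulVec_apply,
      Function.update_of_ne hxq]
    congr 1
    refine sum_congr rfl fun y hy => Function.update_of_ne ?_ s f
    rintro rfl
    exact hq _ ((H.mem_neighborFinset x _).mp hy).symm

end SupEdge

section Reattach

variable {V : Type*} {G : SimpleGraph V} {c p q u v : V}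

/-- `q` is a pendent vertex of `G`, joined to `c` only. -/
def IsPendentAt (G : SimpleGraph V) (q c : V) : Prop :=
  ∀ x, G.Adj q x ↔ x = c

/-- The graph obtained from `G` by deleting all edges at `q` and joining `q` to `p`. For a vertex
`q` pendent at `c` this moves the pendent edge from `c` to `p`. -/
def reattach (G : SimpleGraph V) (q p : V) : SimpleGraph V :=
  G.deleteIncidenceSet q ⊔ SimpleGraph.edge p q

instance [DecidableEq V] [DecidableRel G.Adj] : DecidableRel (reattach G q p).Adj :=
  inferInstanceAs (DecidableRel (G.deleteIncidenceSet q ⊔ SimpleGraph.edge p q).Adj)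

lemma isIsolated_deleteIncidenceSet (G : SimpleGraph V) (q : V) :
    (G.deleteIncidenceSet q).IsIsolated q := by
  intro x hx
  exact (SimpleGraph.deleteIncidenceSet_adj.mp hx).2.1 rfl

lemma not_deleteIncidenceSet_adj_right (G : SimpleGraph V) (p q : V) :
    ¬ (G.deleteIncidenceSet q).Adj p q :=
  fun h => isIsolated_deleteIncidenceSet G q _ h.symm

lemma IsPendentAt.ne (hq : IsPendentAt G q c) : c ≠ q :=
  ((hq c).mpr rfl).ne'

lemma IsPendentAt.degree_eq_one [Fintype (G.neighborSet q)] (hq : IsPendentAt G q c) :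
    G.degree q = 1 :=
  SimpleGraph.degree_eq_one_iff_existsUnique_adj.mpr ⟨c, (hq c).mpr rfl, fun x => (hq x).mp⟩

lemma IsPendentAt.reattach_eq_self (hq : IsPendentAt G q c) : reattach G q c = G := by
  ext x y
  simp only [reattach, SimpleGraph.sup_adj, SimpleGraph.deleteIncidenceSet_adj,
    SimpleGraph.edge_adj]
  have hx := hq x
  have hy := hq y
  have := hq.ne
  have := G.adj_comm x q
  by_cases hxq : x = q <;> by_cases hyq : y = q <;> simp_all

lemma isPendentAt_reattach (G : SimpleGraph V) (hpq : p ≠ q) :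
    IsPendentAt (reattach G q p) q p := by
  intro x
  simp only [reattach, SimpleGraph.sup_adj, SimpleGraph.deleteIncidenceSet_adj,
    SimpleGraph.edge_adj]
  grind

lemma IsPendentAt.connected_reattach (hq : IsPendentAt G q c) (hG : G.Connected) (hpq : p ≠ q) :
    (reattach G q p).Connected := by
  have hinduce : (G.induce {q}ᶜ).Preconnected :=
    hG.preconnected.induce_of_degree_eq_one fun v hv => by
      obtain rfl : v = q := by simpa using hv
      exact fun x hx y hy => ((hq x).mp hx).trans ((hq y).mp hy).symm
  have hedge : (reattach G q p).Adj p q := ((isPendentAt_reattach G hpq p).mpr rfl).symm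
  refine (SimpleGraph.connected_iff_exists_forall_reachable _).mpr ⟨p, fun x => ?_⟩
  obtain rfl | hxq := eq_or_ne x q
  · exact hedge.reachable
  · let φ : G.induce {q}ᶜ →g reattach G q p :=
      ⟨(↑), fun {x y} hxy => Or.inl (SimpleGraph.deleteIncidenceSet_adj.mpr ⟨hxy, x.2, y.2⟩)⟩
    exact (hinduce ⟨p, hpq⟩ ⟨x, hxq⟩).map φ

lemma IsPendentAt.degree_reattach [Fintype V] [DecidableEq V] [DecidableRel G.Adj]
    (hq : IsPendentAt G q c) (hpq : p ≠ q) (x : V) :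
    (reattach G q p).degree x + (if x = c then 1 else 0) =
      G.degree x + if x = p then 1 else 0 := by
  have hdegree {a : V} (ha : a ≠ q) : (reattach G q a).degree x =
      (G.deleteIncidenceSet q).degree x + ((if x = a then 1 else 0) + if x = q then 1 else 0) :=
    degree_sup_edge _ ha (not_deleteIncidenceSet_adj_right G a q) x
  have hG : G.degree x = (reattach G q c).degree x := by congr!; exact hq.reattach_eq_self.symm
  have hc := hdegree hq.ne
  have hp := hdegree hpq
  omega

lemma IsUnitPotential.deleteIncidenceSet [Fintype V] [DecidableEq V] [DecidableRel G.Adj]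
    {f : V → ℝ} (hf : IsUnitPotential G u v f) (hq : IsPendentAt G q c) (hu : u ≠ q)
    (hv : v ≠ q) : IsUnitPotential (G.deleteIncidenceSet q) u v f := by
  have hL := calc G.lapMatrix ℝ *ᵥ f
    _ = (reattach G q c).lapMatrix ℝ *ᵥ f := by congr!; exact hq.reattach_eq_self.symm
    _ = (G.deleteIncidenceSet q).lapMatrix ℝ *ᵥ f +
          (f c - f q) • (Pi.single c 1 - Pi.single q 1) :=
        lapMatrix_sup_edge_mulVec _ hq.ne (not_deleteIncidenceSet_adj_right G c q) f
  have hcq : f c - f q = 0 := by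
    have hLq := congrFun (hf.symm.trans hL) q
    rw [Pi.add_apply, lapMatrix_mulVec_apply_of_isIsolated (isIsolated_deleteIncidenceSet G q)]
      at hLq
    simpa [hu, hv, hq.ne, sub_eq_zero, eq_comm] using hLq
  rw [IsUnitPotential, ← hf, hL, hcq, zero_smul, add_zero]

lemma lapMatrix_reattach_mulVec_update [Fintype V] [DecidableEq V] (G : SimpleGraph V)
    [DecidableRel G.Adj] {R : Type*} [Ring R] (hpq : p ≠ q) (f : V → R) (s : R) :
    (reattach G q p).lapMatrix R *ᵥ Function.update f q s =
      (G.deleteIncidenceSet q).lapMatrix R *ᵥ f +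
        (f p - s) • (Pi.single p 1 - Pi.single q 1) := by
  refine (lapMatrix_sup_edge_mulVec _ hpq (not_deleteIncidenceSet_adj_right G p q) _).trans ?_
  rw [lapMatrix_mulVec_update_of_isIsolated (isIsolated_deleteIncidenceSet G q),
    Function.update_self, Function.update_of_ne hpq]

lemma IsPendentAt.effRes_reattach_of_ne [Finite V] (hq : IsPendentAt G q c) (hG : G.Connected)
    (hpq : p ≠ q) (hu : u ≠ q) (hv : v ≠ q) : effRes (reattach G q p) u v = effRes G u v := by
  classical
  have := Fintype.ofFinite V
  obtain ⟨f, hf⟩ := exists_isUnitPotential hG u v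
  have hf' : IsUnitPotential (reattach G q p) u v (Function.update f q (f p)) := by
    rw [IsUnitPotential, lapMatrix_reattach_mulVec_update G hpq, hf.deleteIncidenceSet hq hu hv,
      sub_self, zero_smul, add_zero]
  rw [hf'.effRes_eq (hq.connected_reattach hG hpq), hf.effRes_eq hG,
    Function.update_of_ne hu, Function.update_of_ne hv]

lemma IsPendentAt.effRes_reattach_self_left [Finite V] (hq : IsPendentAt G q c) (hG : G.Connected)
    (hpq : p ≠ q) (hv : v ≠ q) : effRes (reattach G q p) q v = effRes G p v + 1 := by
  classical
  have := Fintype.ofFinite V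
  obtain ⟨f, hf⟩ := exists_isUnitPotential hG p v
  have hf' : IsUnitPotential (reattach G q p) q v (Function.update f q (f p - 1)) := by
    rw [IsUnitPotential, lapMatrix_reattach_mulVec_update G hpq, hf.deleteIncidenceSet hq hpq hv,
      sub_sub_cancel, one_smul, sub_add_sub_cancel]
  rw [hf'.effRes_eq (hq.connected_reattach hG hpq), hf.effRes_eq hG,
    Function.update_self, Function.update_of_ne hv]
  ring

lemma IsPendentAt.effRes_eq_add_one [Finite V] (hq : IsPendentAt G q c) (hG : G.Connected)
    (hv : v ≠ q) : effRes G q v = effRes G c v + 1 := by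
  simpa only [hq.reattach_eq_self] using hq.effRes_reattach_self_left hG hq.ne hv

end Reattach

section DegreeResistance

lemma Kfv_eq_sum {V : Type*} [Fintype V] (G : SimpleGraph V) (v : V) :
    Kfv G v = ∑ u, effRes G u v := by
  unfold Kfv
  convert rfl

lemma Dv_eq_sum {V : Type*} [Fintype V] (G : SimpleGraph V) [DecidableRel G.Adj] (v : V) :
    Dv G v = ∑ u, (G.degree u : ℝ) * effRes G u v := by
  unfold Dv
  convert rfl

lemma degRes_eq_sum_degree_mul_Kfv {V : Type*} [Fintype V] {G : SimpleGraph V}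
    [DecidableRel G.Adj] (hG : G.Connected) :
    degRes G = ∑ u, (G.degree u : ℝ) * Kfv G u := by
  have hdef : degRes G =
      (1 / 2) * ∑ u, ∑ v, ((G.degree u : ℝ) + G.degree v) * effRes G u v := by
    unfold degRes
    convert rfl
  have hfst : ∑ u, ∑ v, (G.degree u : ℝ) * effRes G u v = ∑ u, (G.degree u : ℝ) * Kfv G u := by
    simp only [Kfv_eq_sum, mul_sum, effRes_comm hG]
  have hsnd : ∑ u, ∑ v, (G.degree v : ℝ) * effRes G u v = ∑ u, (G.degree u : ℝ) * Kfv G u := by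
    rw [sum_comm]
    simp only [Kfv_eq_sum, mul_sum]
  simp only [hdef, add_mul, sum_add_distrib, hfst, hsnd]
  ring

variable {V : Type*} {G : SimpleGraph V} {c p q u : V}

lemma IsPendentAt.effRes_right_eq [Finite V] [DecidableEq V] (hq : IsPendentAt G q c)
    (hG : G.Connected) (x : V) :
    effRes G x q = effRes G x c + 1 - if x = q then 2 else 0 := by
  obtain rfl | hx := eq_or_ne x q
  · rw [hq.effRes_eq_add_one hG hq.ne, effRes_self, effRes_self, if_pos rfl]
    norm_num
  · rw [effRes_comm hG, hq.effRes_eq_add_one hG hx, effRes_comm hG, if_neg hx, sub_zero]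

lemma IsPendentAt.Kfv_eq [Finite V] (hq : IsPendentAt G q c) (hG : G.Connected) :
    Kfv G q = Kfv G c + Nat.card V - 2 := by
  classical
  have := Fintype.ofFinite V
  simp only [Kfv_eq_sum, hq.effRes_right_eq hG, sum_sub_distrib, sum_add_distrib, sum_const,
    card_univ, nsmul_one, Fintype.sum_ite_eq', Nat.card_eq_fintype_card]

lemma IsPendentAt.Dv_eq [Fintype V] [DecidableRel G.Adj] (hq : IsPendentAt G q c)
    (hG : G.Connected) : Dv G q = Dv G c + 2 * #G.edgeFinset - 2 := by
  classical
  have hsum : ∑ x, (G.degree x : ℝ) = 2 * #G.edgeFinset := by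
    exact_mod_cast G.sum_degrees_eq_twice_card_edges
  simp only [Dv_eq_sum, hq.effRes_right_eq hG, mul_sub, mul_add, mul_one, mul_ite, mul_zero,
    sum_sub_distrib, sum_add_distrib, hsum, Fintype.sum_ite_eq', hq.degree_eq_one]
  norm_num

lemma IsPendentAt.Kfv_reattach_of_ne [Finite V] (hq : IsPendentAt G q c) (hG : G.Connected)
    (hpq : p ≠ q) (hu : u ≠ q) :
    Kfv (reattach G q p) u = Kfv G u + effRes G u p - effRes G u c := by
  classical
  have := Fintype.ofFinite V
  have hrest : ∑ x ∈ {q}ᶜ, effRes (reattach G q p) x u = ∑ x ∈ {q}ᶜ, effRes G x u :=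
    sum_congr rfl fun x hx => hq.effRes_reattach_of_ne hG hpq (by simpa using hx) hu
  rw [Kfv_eq_sum, Kfv_eq_sum, Fintype.sum_eq_add_sum_compl q, Fintype.sum_eq_add_sum_compl q,
    hrest, hq.effRes_reattach_self_left hG hpq hu, hq.effRes_eq_add_one hG hu,
    effRes_comm hG u p, effRes_comm hG u c]
  ring

lemma IsPendentAt.Kfv_reattach_self [Finite V] (hq : IsPendentAt G q c) (hG : G.Connected)
    (hpq : p ≠ q) :
    Kfv (reattach G q p) q = Kfv G q + Kfv G p - Kfv G c - effRes G p c := by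
  rw [(isPendentAt_reattach G hpq).Kfv_eq (hq.connected_reattach hG hpq),
    hq.Kfv_reattach_of_ne hG hpq hpq, hq.Kfv_eq hG, effRes_self]
  ring

lemma IsPendentAt.Kfv_reattach [Finite V] [DecidableEq V] (hq : IsPendentAt G q c)
    (hG : G.Connected) (hpq : p ≠ q) (u : V) :
    Kfv (reattach G q p) u = Kfv G u + effRes G u p - effRes G u c +
      if u = q then Kfv G p - Kfv G c - 2 * effRes G p c else 0 := by
  obtain rfl | hu := eq_or_ne u q
  · rw [hq.Kfv_reattach_self hG hpq, hq.effRes_eq_add_one hG hpq, hq.effRes_eq_add_one hG hq.ne,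
      effRes_self, if_pos rfl, effRes_comm hG c]
    ring
  · rw [if_neg hu, add_zero, hq.Kfv_reattach_of_ne hG hpq hu]

theorem IsPendentAt.degRes_reattach [Finite V] (hq : IsPendentAt G q c) (hG : G.Connected)
    (hpq : p ≠ q) :
    degRes (reattach G q p) =
      degRes G + (Dv G p - Dv G c) + 2 * (Kfv G p - Kfv G c) - 4 * effRes G p c := by
  classical
  have := Fintype.ofFinite V
  have hdegree (u : V) : ((reattach G q p).degree u : ℝ) =
      G.degree u + (if u = p then 1 else 0) - if u = c then 1 else 0 := by
    rw [eq_sub_iff_add_eq]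
    exact_mod_cast hq.degree_reattach hpq u
  have hsum : ∑ u, (G.degree u : ℝ) * Kfv (reattach G q p) u =
      degRes G + Dv G p - Dv G c + (Kfv G p - Kfv G c - 2 * effRes G p c) := by
    simp only [hq.Kfv_reattach hG hpq, degRes_eq_sum_degree_mul_Kfv hG, Dv_eq_sum, mul_add,
      mul_sub (G.degree _ : ℝ), mul_ite, mul_zero, sum_add_distrib, sum_sub_distrib,
      Fintype.sum_ite_eq', hq.degree_eq_one, Nat.cast_one, one_mul]
  calc degRes (reattach G q p)
    _ = ∑ u, ((reattach G q p).degree u : ℝ) * Kfv (reattach G q p) u :=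
        degRes_eq_sum_degree_mul_Kfv (hq.connected_reattach hG hpq)
    _ = ∑ u, (G.degree u : ℝ) * Kfv (reattach G q p) u + Kfv (reattach G q p) p -
          Kfv (reattach G q p) c := by
        simp only [hdegree, add_mul, sub_mul, sum_add_distrib, sum_sub_distrib, ite_mul, one_mul,
          zero_mul, Fintype.sum_ite_eq']
    _ = _ := by
        rw [hsum, hq.Kfv_reattach_of_ne hG hpq hpq, hq.Kfv_reattach_of_ne hG hpq hq.ne,
          effRes_self, effRes_self, effRes_comm hG c p]
        ring

theorem IsPendentAt.degRes_reattach_of_isPendentAt [Fintype V] [DecidableRel G.Adj]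
    (hq : IsPendentAt G q c) (hp : IsPendentAt G p c) (hG : G.Connected) (hpq : p ≠ q) :
    degRes (reattach G q p) = degRes G + 2 * #G.edgeFinset + 2 * Nat.card V - 10 := by
  rw [hq.degRes_reattach hG hpq, hp.Dv_eq hG, hp.Kfv_eq hG, hp.effRes_eq_add_one hG hp.ne,
    effRes_self]
  ring

end DegreeResistance

section Cacti

variable {n t : ℕ}

instance : DecidableRel (G0 n t).Adj := by
  unfold G0
  infer_instance

lemma G0_adj {a b : Fin n} : (G0 n t).Adj a b ↔ a ≠ b ∧
    ((a.val = 0 ∨ Odd a.val ∧ b.val = a.val + 1 ∧ b.val ≤ 2 * t) ∨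
      (b.val = 0 ∨ Odd b.val ∧ a.val = b.val + 1 ∧ a.val ≤ 2 * t)) :=
  SimpleGraph.fromRel_adj ..

lemma connected_G0 [NeZero n] (t : ℕ) : (G0 n t).Connected :=
  SimpleGraph.Connected.of_isUniversal (v := 0) fun _ hw => G0_adj.mpr ⟨hw, .inl (.inl rfl)⟩

lemma isPendentAt_G0 [NeZero n] {a : Fin n} (ha : 2 * t < a) : IsPendentAt (G0 n t) a 0 := by
  intro x
  simp only [G0_adj, ne_eq, Fin.ext_iff, Fin.val_zero]
  omega

lemma G3g_eq_reattach [NeZero n] {p q : Fin n} (hp : p.val = 2 * t + 1) (hq : q.val = 2 * t + 2) :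
    G3g n t = reattach (G0 n t) q p := by
  ext a b
  simp only [G3g, reattach, SimpleGraph.fromRel_adj, SimpleGraph.sup_adj,
    SimpleGraph.deleteIncidenceSet_adj, SimpleGraph.edge_adj, G0_adj, ne_eq, Fin.ext_iff, hp, hq,
    Nat.odd_iff]
  omega

lemma G0_zero_eq_starGraph [NeZero n] : G0 n 0 = SimpleGraph.starGraph 0 := by
  ext a b
  simp only [G0_adj, SimpleGraph.starGraph_adj, ne_eq, Fin.ext_iff, Fin.val_zero]
  omega

lemma G0_succ_eq_sup_edge {p q : Fin n} (hp : p.val = 2 * t + 1) (hq : q.val = 2 * t + 2) :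
    G0 n (t + 1) = G0 n t ⊔ SimpleGraph.edge p q := by
  ext a b
  simp only [SimpleGraph.sup_adj, SimpleGraph.edge_adj, G0_adj, ne_eq, Fin.ext_iff, hp, hq,
    Nat.odd_iff]
  omega

lemma card_edgeFinset_G0 (ht : 2 * t < n) :
    #(G0 n t).edgeFinset + 1 = n + t := by
  induction t with
  | zero =>
    have : NeZero n := ⟨by omega⟩
    have htree : (G0 n 0).IsTree := by
      rw [G0_zero_eq_starGraph]
      exact SimpleGraph.isTree_starGraph 0
    simpa only [Fintype.card_fin, add_zero] using htree.card_edgeFinset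
  | succ t ih =>
    let p : Fin n := ⟨2 * t + 1, by omega⟩
    let q : Fin n := ⟨2 * t + 2, by omega⟩
    have hnadj : ¬ (G0 n t).Adj p q := by simp [G0_adj, p, q]
    have hpq : p ≠ q := by simp [p, q]
    have hsucc : #(G0 n (t + 1)).edgeFinset = #(G0 n t ⊔ SimpleGraph.edge p q).edgeFinset := by
      congr!
      exact G0_succ_eq_sup_edge rfl rfl
    rw [hsucc, SimpleGraph.card_edgeFinset_sup_edge (hn := hnadj) (h := hpq)]
    have := ih (by omega)
    omega

end Cacti

/-- `D_R(G3) - D_R(G⁰(n,t)) = 4n + 2t - 12`. -/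
theorem stmt_8 (n t : ℕ) (h1 : 2 * t + 3 ≤ n) (ht : 1 ≤ t) :
    degRes (G3g n t) - degRes (G0 n t) = 4 * (n : ℝ) + 2 * t - 12 := by
  have : NeZero n := ⟨by omega⟩
  let p : Fin n := ⟨2 * t + 1, by omega⟩
  let q : Fin n := ⟨2 * t + 2, by omega⟩
  have hp : IsPendentAt (G0 n t) p 0 := isPendentAt_G0 (by simp [p])
  have hq : IsPendentAt (G0 n t) q 0 := isPendentAt_G0 (by simp [q])
  have hpq : p ≠ q := by simp [p, q]
  have hcard : (#(G0 n t).edgeFinset : ℝ) + 1 = n + t :=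
    mod_cast card_edgeFinset_G0 (by omega)
  rw [G3g_eq_reattach (p := p) (q := q) rfl rfl,
    hq.degRes_reattach_of_isPendentAt hp (connected_G0 t) hpq, Nat.card_fin]
  linarith
end
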